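/- arXiv:1509.05485 — 2 statements merged into one kernel-verified Lean document; each statement's English description precedes it below -/
import Mathlib

section
/- Let p > 0 and K ⊂ ℝⁿ a convex body with 0 ∈ int K, and φ : ℝⁿ → ℝⁿ linear with determinant ±1. Then Ω_p(φK) = Ω_p(K), where Ω_p is the L_p affine surface area defined as the infimum over measurable positive g with ∫_{∂K} g^p (h_K∘ν_K)^{1-p} dH^{n-1} < ∞ of (∫_{∂K} g^{-n} H_K dH^{n-1})^{p/(n+p)} (∫_{∂K} g^p (h_K∘ν_K)^{1-p} dH^{n-1})^{n/(n+p)}. -/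
/-!
For a convex body `K` with `0` in its interior, let `V` be the cone measure of `K` (the normalised
volume of the cone with apex `0` over a piece of the boundary) and let `W` be the cone measure of
the polar body, transported to the boundary of `K` by the gradient of the support function. Off
null sets, with `h = h_K ∘ ν_K`, one has `dV = h dH^{n-1}` and `H_K = h ^ (n + 1) dW/dV`, so the
substitution `g = f h` turns both integrals in the definition of `Ω_p` into expressions in `V` and
`W` alone:
`∫ g ^ p h ^ (1 - p) dH^{n-1} = ∫ f ^ p dV` and
`∫ g ^ (-n) H_K dH^{n-1} = ∫ f ^ (-n) (dW/dV) dV`.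
Being defined through volumes of cones, `V` and `W` are pushed forward by a linear map `φ` up to
the factors `|det φ|` and `|det φ|⁻¹`.

The formula `dV = h dH^{n-1}` is local: near a boundary point where the gauge is differentiable, a
shear close to the identity flattens the boundary onto its tangent hyperplane while mapping cones
to cones, and cones over subsets of a hyperplane are handled by Fubini.
-/

open MeasureTheory Metric Set Filter
open scoped RealInnerProductSpace ENNReal NNReal Topology

noncomputable section

abbrev Euc (n : ℕ) := EuclideanSpace ℝ (Fin n)

def IsConvexBody {n : ℕ} (K : Set (Euc n)) : Prop :=
  IsCompact K ∧ Convex ℝ K ∧ (interior K).Nonempty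

def IsOuterNormalAt {n : ℕ} (K : Set (Euc n)) (u x : Euc n) : Prop :=
  x ∈ frontier K ∧ ∀ y ∈ K, ⟪y, u⟫ ≤ ⟪x, u⟫

open Classical in
/-- The Gauss map: at a regular boundary point, the unique outer unit normal. -/
def gaussMap {n : ℕ} (K : Set (Euc n)) (x : Euc n) : Euc n :=
  if h : ∃ u, ‖u‖ = 1 ∧ IsOuterNormalAt K u x then h.choose else 0

open Classical in
/-- The inverse Gauss map: at a regular normal vector, the unique boundary point
with that outer normal. -/
def gaussMapInv {n : ℕ} (K : Set (Euc n)) (u : Euc n) : Euc n :=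
  if h : ∃ x, IsOuterNormalAt K u x then h.choose else 0

/-- The (n-1)-th curvature measure: (n-1)-dimensional Hausdorff measure on the boundary. -/
def bdryMeasure (n : ℕ) (K : Set (Euc n)) : Measure (Euc n) :=
  (Measure.hausdorffMeasure ((n : ℝ) - 1)).restrict (frontier K)

/-- The 0-th curvature measure: C₀(K,β) = H^{n-1}(ν(K,β)), realized as the pushforward of
the spherical Hausdorff measure under the inverse Gauss map. -/
def curv0 (n : ℕ) (K : Set (Euc n)) : Measure (Euc n) :=
  Measure.map (gaussMapInv K)
    ((Measure.hausdorffMeasure ((n : ℝ) - 1)).restrict (Metric.sphere (0 : Euc n) 1))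

/-- The generalized Gauss curvature H_K, as density of C₀(K,·) w.r.t. C_{n-1}(K,·). -/
def gaussCurv (n : ℕ) (K : Set (Euc n)) : Euc n → ℝ≥0∞ :=
  Measure.rnDeriv (curv0 n K) (bdryMeasure n K)

/-- The surface area measure S_K, pushforward of boundary Hausdorff measure by the Gauss map. -/
def surfaceMeasure (n : ℕ) (K : Set (Euc n)) : Measure (Euc n) :=
  Measure.map (gaussMap K) (bdryMeasure n K)

/-- The generalized curvature function F_K, as density of S_K w.r.t. spherical Hausdorff measure. -/
def curvFn (n : ℕ) (K : Set (Euc n)) : Euc n → ℝ≥0∞ :=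
  Measure.rnDeriv (surfaceMeasure n K)
    ((Measure.hausdorffMeasure ((n : ℝ) - 1)).restrict (Metric.sphere (0 : Euc n) 1))

/-- The support function of K. -/
def suppFn {n : ℕ} (K : Set (Euc n)) (x : Euc n) : ℝ :=
  sSup ((fun y => ⟪y, x⟫) '' K)


/-- L_p affine surface area in the form with measurable g: the infimum over measurable
positive g with finite second integral of
(∫ g^{-n} H_K dH^{n-1})^{p/(n+p)} (∫ g^p (h_K∘ν_K)^{1-p} dH^{n-1})^{n/(n+p)}. -/
def lpASAm (n : ℕ) (p : ℝ) (K : Set (Euc n)) : ℝ≥0∞ :=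
  sInf {v : ℝ≥0∞ | ∃ g : Euc n → ℝ≥0∞, Measurable g ∧ (∀ x, 0 < g x ∧ g x < ⊤) ∧
    (∫⁻ x, g x ^ p * ENNReal.ofReal (suppFn K (gaussMap K x)) ^ (1 - p)
      ∂(bdryMeasure n K)) < ⊤ ∧
    v = (∫⁻ x, g x ^ (-(n : ℝ)) * gaussCurv n K x ∂(bdryMeasure n K)) ^ (p / (n + p)) *
        (∫⁻ x, g x ^ p * ENNReal.ofReal (suppFn K (gaussMap K x)) ^ (1 - p)
          ∂(bdryMeasure n K)) ^ ((n : ℝ) / (n + p))}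

/-- A positively homogeneous, subadditive function which is positive off the origin. Gauges and
support functions of convex bodies around the origin are of this kind. -/
structure IsAsymmetricNorm {E : Type*} [NormedAddCommGroup E] [NormedSpace ℝ E] (g : E → ℝ) :
    Prop where
  add_le : ∀ x y, g (x + y) ≤ g x + g y
  smul_of_nonneg : ∀ {t : ℝ}, 0 ≤ t → ∀ x, g (t • x) = t * g x
  pos : ∀ {x}, x ≠ 0 → 0 < g x

theorem isAsymmetricNorm_norm (E : Type*) [NormedAddCommGroup E] [NormedSpace ℝ E] :
    IsAsymmetricNorm (norm : E → ℝ) where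
  add_le := norm_add_le
  smul_of_nonneg ht x := by rw [norm_smul, Real.norm_of_nonneg ht]
  pos := norm_pos_iff.2

namespace IsAsymmetricNorm

variable {E : Type*} [NormedAddCommGroup E] [NormedSpace ℝ E] {g : E → ℝ}

theorem map_zero (hg : IsAsymmetricNorm g) : g 0 = 0 := by
  simpa using hg.smul_of_nonneg le_rfl 0

theorem ne_zero_of_pos (hg : IsAsymmetricNorm g) {x : E} (hx : 0 < g x) : x ≠ 0 :=
  fun h => hx.ne' (h ▸ hg.map_zero)

theorem sub_le (hg : IsAsymmetricNorm g) (x y : E) : g x - g y ≤ g (x - y) := by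
  have := hg.add_le (x - y) y
  rw [sub_add_cancel] at this
  linarith

theorem convexOn (hg : IsAsymmetricNorm g) : ConvexOn ℝ univ g :=
  ⟨convex_univ, fun x _ y _ a b ha hb _ => (hg.add_le _ _).trans_eq <| by
    rw [hg.smul_of_nonneg ha, hg.smul_of_nonneg hb, smul_eq_mul, smul_eq_mul]⟩

theorem eq_norm_mul (hg : IsAsymmetricNorm g) {x : E} (hx : x ≠ 0) :
    g x = ‖x‖ * g (‖x‖⁻¹ • x) := by
  rw [← hg.smul_of_nonneg (norm_nonneg x), smul_inv_smul₀ (norm_ne_zero_iff.2 hx)]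

section Bounds

variable [FiniteDimensional ℝ E]

theorem continuous (hg : IsAsymmetricNorm g) : Continuous g :=
  hg.convexOn.locallyLipschitz.continuous

theorem exists_mul_norm_le (hg : IsAsymmetricNorm g) : ∃ r : ℝ, 0 < r ∧ ∀ x, r * ‖x‖ ≤ g x := by
  obtain ⟨r, hr, h⟩ := (isCompact_sphere (0 : E) 1).exists_forall_le' hg.continuous.continuousOn
    (fun x hx => hg.pos (ne_of_mem_sphere hx one_ne_zero))
  refine ⟨r, hr, fun x => ?_⟩
  rcases eq_or_ne x 0 with rfl | hx
  · rw [norm_zero, mul_zero, hg.map_zero]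
  · rw [hg.eq_norm_mul hx, mul_comm]
    gcongr
    exact h _ (by simp [norm_smul, hx])

theorem exists_le_mul_norm (hg : IsAsymmetricNorm g) : ∃ C : ℝ≥0, ∀ x, g x ≤ C * ‖x‖ := by
  obtain ⟨C, h⟩ := (isCompact_sphere (0 : E) 1).exists_bound_of_continuousOn
    hg.continuous.continuousOn
  refine ⟨C.toNNReal, fun x => ?_⟩
  rcases eq_or_ne x 0 with rfl | hx
  · rw [norm_zero, mul_zero, hg.map_zero]
  · rw [hg.eq_norm_mul hx, mul_comm]
    gcongr
    exact ((le_abs_self _).trans (h _ (by simp [norm_smul, hx]))).trans (Real.le_coe_toNNReal C)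

theorem exists_lipschitzWith (hg : IsAsymmetricNorm g) : ∃ C : ℝ≥0, LipschitzWith C g := by
  obtain ⟨C, hC⟩ := hg.exists_le_mul_norm
  refine ⟨C, LipschitzWith.of_le_add_mul C fun x y => ?_⟩
  rw [dist_eq_norm]
  linarith [hg.sub_le x y, hC (x - y)]

theorem isCompact_level (hg : IsAsymmetricNorm g) : IsCompact {x | g x = 1} := by
  obtain ⟨r, hr, h⟩ := hg.exists_mul_norm_le
  refine isCompact_of_isClosed_isBounded (isClosed_eq hg.continuous continuous_const)
    (isBounded_closedBall (x := 0) (r := r⁻¹) |>.subset fun x (hx : g x = 1) => ?_)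
  rw [mem_closedBall_zero_iff, ← one_div, le_div_iff₀' hr, ← hx]
  exact h x

theorem isBounded_sublevel (hg : IsAsymmetricNorm g) : Bornology.IsBounded {x | g x < 1} := by
  obtain ⟨r, hr, h⟩ := hg.exists_mul_norm_le
  refine isBounded_closedBall (x := 0) (r := r⁻¹) |>.subset fun x (hx : g x < 1) => ?_
  rw [mem_closedBall_zero_iff, ← one_div, le_div_iff₀' hr]
  exact (h x).trans hx.le

theorem ae_differentiableAt [MeasurableSpace E] [BorelSpace E] (μ : Measure E)
    [μ.IsAddHaarMeasure] (hg : IsAsymmetricNorm g) : ∀ᵐ x ∂μ, DifferentiableAt ℝ g x :=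
  let ⟨_, h⟩ := hg.exists_lipschitzWith
  h.ae_differentiableAt

end Bounds

section Derivative

variable {x : E}

theorem hasFDerivAt_smul (hg : IsAsymmetricNorm g) {t : ℝ} (ht : 0 < t)
    (hx : DifferentiableAt ℝ g x) : HasFDerivAt g (fderiv ℝ g x) (t • x) := by
  have hscale : g = fun y => t * g (t⁻¹ • y) := by
    funext y
    rw [hg.smul_of_nonneg (by positivity), mul_inv_cancel_left₀ ht.ne']
  have hx' : HasFDerivAt g (fderiv ℝ g x) (t⁻¹ • t • x) := by
    rw [inv_smul_smul₀ ht.ne']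
    exact hx.hasFDerivAt
  have := (hx'.comp (t • x) ((hasFDerivAt_id _).const_smul t⁻¹)).const_mul t
  rw [ContinuousLinearMap.comp_smul, smul_inv_smul₀ ht.ne', ContinuousLinearMap.comp_id] at this
  exact this.congr_of_eventuallyEq (.of_eq hscale)

theorem differentiableAt_smul_iff (hg : IsAsymmetricNorm g) {t : ℝ} (ht : 0 < t) :
    DifferentiableAt ℝ g (t • x) ↔ DifferentiableAt ℝ g x := by
  refine ⟨fun h => ?_, fun h => (hg.hasFDerivAt_smul ht h).differentiableAt⟩
  simpa only [inv_smul_smul₀ ht.ne'] using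
    (hg.hasFDerivAt_smul (inv_pos.2 ht) h).differentiableAt

theorem fderiv_smul (hg : IsAsymmetricNorm g) {t : ℝ} (ht : 0 < t) (x : E) :
    fderiv ℝ g (t • x) = fderiv ℝ g x := by
  by_cases h : DifferentiableAt ℝ g x
  · exact (hg.hasFDerivAt_smul ht h).fderiv
  · rw [fderiv_zero_of_not_differentiableAt h,
      fderiv_zero_of_not_differentiableAt (mt (hg.differentiableAt_smul_iff ht).1 h)]

theorem fderiv_apply_self (hg : IsAsymmetricNorm g) (hx : DifferentiableAt ℝ g x) :
    fderiv ℝ g x x = g x := by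
  have hcurve : HasDerivAt (fun t : ℝ => g (t • x)) (fderiv ℝ g x x) 1 := by
    have hline : HasDerivAt (fun t : ℝ => t • x) x 1 := by
      simpa using (hasDerivAt_id (1 : ℝ)).smul_const x
    refine HasFDerivAt.comp_hasDerivAt 1 ?_ hline
    rw [one_smul]
    exact hx.hasFDerivAt
  have hlinear : HasDerivAt (fun t : ℝ => g (t • x)) (g x) 1 := by
    refine (hasDerivAt_mul_const (g x)).congr_of_eventuallyEq ?_
    filter_upwards [lt_mem_nhds one_pos] with t ht
    exact hg.smul_of_nonneg ht.le x
  exact hcurve.unique hlinear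

/-- Extend the segment from `y` to `x` beyond `x` to a point `z` at a fixed small distance:
convexity bounds the slope of `g` between `y` and `x` by the slope between `x` and `z`, which
differentiability at `x₀` controls. -/
theorem eventually_sub_sub_fderiv_le (hg : IsAsymmetricNorm g) {x₀ : E}
    (hx₀ : DifferentiableAt ℝ g x₀) {ε : ℝ} (hε : 0 < ε) :
    ∀ᶠ x in 𝓝 x₀, ∀ y, g x - g y - fderiv ℝ g x₀ (x - y) ≤ ε * ‖x - y‖ := by
  obtain ⟨δ, hδ, happrox⟩ := Metric.eventually_nhds_iff.1
    (hx₀.hasFDerivAt.isLittleO.def (show 0 < ε / 3 by positivity))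
  filter_upwards [ball_mem_nhds x₀ (half_pos hδ)] with x hx y
  rcases eq_or_ne x y with rfl | hxy
  · simp
  have hxy' : 0 < ‖x - y‖ := norm_pos_iff.2 (sub_ne_zero.2 hxy)
  obtain ⟨l, hl, hlxy⟩ : ∃ l > 0, l * ‖x - y‖ = δ / 2 :=
    ⟨δ / 2 / ‖x - y‖, by positivity, div_mul_cancel₀ _ hxy'.ne'⟩
  set z := x + l • (x - y) with hz
  have hzx : dist z x = δ / 2 := by
    rw [dist_eq_norm, hz, add_sub_cancel_left, norm_smul, Real.norm_of_nonneg hl.le, hlxy]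
  rw [mem_ball] at hx
  have hzx₀ : dist z x₀ < δ := by linarith [dist_triangle z x x₀]
  have hgz := happrox hzx₀
  have hgx := happrox (hx.trans (half_lt_self hδ))
  rw [Real.norm_eq_abs, abs_le, ← dist_eq_norm] at hgz hgx
  have hconvex : (1 + l) * g x ≤ g z + l * g y := by
    rw [← hg.smul_of_nonneg (by positivity), ← hg.smul_of_nonneg hl.le]
    refine le_of_eq_of_le (congrArg g ?_) (hg.add_le _ _)
    rw [hz]
    module
  have hslope : fderiv ℝ g x₀ (z - x₀) - fderiv ℝ g x₀ (x - x₀) = l * fderiv ℝ g x₀ (x - y) := by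
    rw [← map_sub, sub_sub_sub_cancel_right, hz, add_sub_cancel_left, map_smul, smul_eq_mul]
  refine le_of_mul_le_mul_left ?_ hl
  have : l * (ε * ‖x - y‖) = ε * (δ / 2) := by rw [← hlxy]; ring
  rw [this]
  have hz_le : ε / 3 * dist z x₀ ≤ ε / 3 * δ := by gcongr
  have hx_le : ε / 3 * dist x x₀ ≤ ε / 3 * (δ / 2) := by gcongr
  nlinarith [hgz.2, hgx.1]

theorem fderiv_apply_le (hg : IsAsymmetricNorm g) (hx : DifferentiableAt ℝ g x) (y : E) :
    fderiv ℝ g x y ≤ g y := by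
  refine le_of_forall_pos_le_add fun ε hε => ?_
  have hε' : 0 < ε / (‖x - y‖ + 1) := by positivity
  have h := (hg.eventually_sub_sub_fderiv_le hx hε').self_of_nhds y
  rw [map_sub, hg.fderiv_apply_self hx] at h
  have : ε / (‖x - y‖ + 1) * ‖x - y‖ ≤ ε := by
    rw [div_mul_eq_mul_div, div_le_iff₀ (by positivity)]
    nlinarith [norm_nonneg (x - y)]
  linarith

/-- By homogeneity a linear approximation of `g` near `x₀` persists on the cone spanned by the
neighbourhood. -/
theorem exists_isOpen_approximatesLinearOn (hg : IsAsymmetricNorm g) {x₀ : E}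
    (hx₀ : DifferentiableAt ℝ g x₀) {c : ℝ≥0} (hc : 0 < c) :
    ∃ U : Set E, IsOpen U ∧ x₀ ∈ U ∧ (∀ t : ℝ, 0 < t → ∀ x ∈ U, t • x ∈ U) ∧
      ApproximatesLinearOn g (fderiv ℝ g x₀) U c := by
  obtain ⟨V, hV, hVo, hx₀V⟩ := _root_.eventually_nhds_iff.1
    (hg.eventually_sub_sub_fderiv_le hx₀ (NNReal.coe_pos.2 hc))
  have hcone : ∀ x ∈ {x : E | ∃ t : ℝ, 0 < t ∧ t • x ∈ V}, ∀ y,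
      g x - g y - fderiv ℝ g x₀ (x - y) ≤ c * ‖x - y‖ := by
    rintro x ⟨t, ht, hx⟩ y
    have h := hV _ hx (t • y)
    rw [← smul_sub, map_smul, norm_smul, Real.norm_of_nonneg ht.le, hg.smul_of_nonneg ht.le,
      hg.smul_of_nonneg ht.le, smul_eq_mul] at h
    exact le_of_mul_le_mul_left (by linarith) ht
  refine ⟨{x | ∃ t : ℝ, 0 < t ∧ t • x ∈ V}, ?_, ⟨1, one_pos, by rwa [one_smul]⟩, ?_, ?_⟩
  · have : {x : E | ∃ t : ℝ, 0 < t ∧ t • x ∈ V} = ⋃ t ∈ Ioi (0 : ℝ), (t • ·) ⁻¹' V := by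
      ext x
      simp
    rw [this]
    exact isOpen_biUnion fun t _ => hVo.preimage (continuous_const_smul t)
  · rintro t ht x ⟨s, hs, hx⟩
    exact ⟨s / t, by positivity, by rwa [smul_smul, div_mul_cancel₀ _ ht.ne']⟩
  · intro x hx y hy
    have hyx := hcone y hy x
    rw [norm_sub_rev, ← neg_sub x y, _root_.map_neg] at hyx
    exact abs_le.2 ⟨by linarith, hcone x hx y⟩

end Derivative

end IsAsymmetricNorm

section ConeMeasure

open scoped Pointwise

variable {E : Type*} [NormedAddCommGroup E] [NormedSpace ℝ E]

/-- The radial projection onto the level set `{g = 1}` of a positively homogeneous function `g`. -/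
def radialProj (g : E → ℝ) (x : E) : E := (g x)⁻¹ • x

/-- The cone measure of `{g < 1}`: a part `A` of the boundary `{g = 1}` is given the `μ`-measure of
the cone over `A` with apex at the origin. -/
def coneMeasure [MeasurableSpace E] (μ : Measure E) (g : E → ℝ) : Measure E :=
  (μ.restrict {x | g x < 1}).map (radialProj g)

theorem Ioo_smul_eq_of_level {g : E → ℝ} (hg : ∀ t : ℝ, 0 < t → ∀ x, g (t • x) = t * g x)
    {A : Set E} (hA : ∀ x ∈ A, g x = 1) :
    Ioo (0 : ℝ) 1 • A = {x | 0 < g x ∧ g x < 1 ∧ radialProj g x ∈ A} := by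
  ext x
  constructor
  · rintro ⟨t, ht, a, ha, rfl⟩
    have hgt : g (t • a) = t := by rw [hg t ht.1, hA a ha, mul_one]
    change 0 < g (t • a) ∧ g (t • a) < 1 ∧ (g (t • a))⁻¹ • t • a ∈ A
    rw [hgt, inv_smul_smul₀ ht.1.ne']
    exact ⟨ht.1, ht.2, ha⟩
  · rintro ⟨hpos, hlt, hx⟩
    exact ⟨g x, ⟨hpos, hlt⟩, radialProj g x, hx, smul_inv_smul₀ hpos.ne' x⟩

theorem Ioo_smul_inter_level {g : E → ℝ} (hg : ∀ t : ℝ, 0 < t → ∀ x, g (t • x) = t * g x)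
    {A : Set E} (hA : ∀ x ∈ A, g x = 1) (t : ℝ) :
    Ioo (0 : ℝ) 1 • A ∩ {x | g x = t} = if t ∈ Ioo (0 : ℝ) 1 then t • A else ∅ := by
  have hgA {s : ℝ} (hs : s ∈ Ioo (0 : ℝ) 1) {x : E} (hx : x ∈ A) : g (s • x) = s := by
    rw [hg s hs.1, hA x hx, mul_one]
  split_ifs with ht
  · ext y
    constructor
    · rintro ⟨⟨s, hs, x, hx, rfl⟩, hst⟩
      exact ⟨x, hx, congrArg (· • x) ((hgA hs hx).symm.trans hst).symm⟩
    · rintro ⟨x, hx, rfl⟩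
      exact ⟨⟨t, ht, x, hx, rfl⟩, hgA ht hx⟩
  · refine eq_empty_of_forall_notMem ?_
    rintro _ ⟨⟨s, hs, x, hx, rfl⟩, hst⟩
    exact ht (((hgA hs hx).symm.trans hst) ▸ hs)

theorem image_Ioo_smul {G : E → E} (hG : ∀ t : ℝ, 0 < t → ∀ x, G (t • x) = t • G x) (A : Set E) :
    G '' (Ioo (0 : ℝ) 1 • A) = Ioo (0 : ℝ) 1 • G '' A := by
  ext y
  constructor
  · rintro ⟨_, ⟨t, ht, x, hx, rfl⟩, rfl⟩
    exact ⟨t, ht, G x, mem_image_of_mem G hx, (hG t ht.1 x).symm⟩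
  · rintro ⟨t, ht, _, ⟨x, hx, rfl⟩, rfl⟩
    exact ⟨t • x, ⟨t, ht, x, hx, rfl⟩, hG t ht.1 x⟩

theorem IsAsymmetricNorm.radialProj_smul {g : E → ℝ} (hg : IsAsymmetricNorm g)
    {t : ℝ} (ht : 0 < t) (x : E) :
    radialProj g (t • x) = radialProj g x := by
  rw [radialProj, radialProj, hg.smul_of_nonneg ht.le, smul_smul, mul_inv_rev,
    inv_mul_cancel_right₀ ht.ne']

theorem measurable_radialProj [MeasurableSpace E] [BorelSpace E] [SecondCountableTopology E]
    {g : E → ℝ} (hg : Measurable g) : Measurable (radialProj g) :=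
  hg.inv.smul measurable_id

theorem coneMeasure_smul_measure [MeasurableSpace E] (c : ℝ≥0∞) (μ : Measure E) (g : E → ℝ) :
    coneMeasure (c • μ) g = c • coneMeasure μ g := by
  rw [coneMeasure, Measure.restrict_smul, Measure.map_smul, coneMeasure]

theorem IsAsymmetricNorm.isFiniteMeasure_coneMeasure [FiniteDimensional ℝ E] [MeasurableSpace E]
    {μ : Measure E} [IsFiniteMeasureOnCompacts μ] {g : E → ℝ}
    (hg : IsAsymmetricNorm g) :
    IsFiniteMeasure (coneMeasure μ g) := by
  have : IsFiniteMeasure (μ.restrict {x | g x < 1}) :=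
    isFiniteMeasure_restrict.2 hg.isBounded_sublevel.measure_lt_top.ne
  exact inferInstanceAs (IsFiniteMeasure (Measure.map _ _))

variable [FiniteDimensional ℝ E] [MeasurableSpace E] [BorelSpace E] {μ : Measure E} {f g : E → ℝ}

theorem coneMeasure_map {F : Type*} [NormedAddCommGroup F] [NormedSpace ℝ F]
    [FiniteDimensional ℝ F] [MeasurableSpace F] [BorelSpace F] (φ : E ≃L[ℝ] F) {g : F → ℝ}
    (hg : Measurable g) : coneMeasure (μ.map φ) g = (coneMeasure μ (g ∘ φ)).map φ := by
  have hφ : Measurable φ := φ.continuous.measurable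
  rw [coneMeasure, coneMeasure, Measure.restrict_map hφ (measurableSet_lt hg measurable_const),
    Measure.map_map (measurable_radialProj hg) hφ,
    Measure.map_map hφ (measurable_radialProj (hg.comp hφ))]
  congr 1
  funext x
  simp only [Function.comp_apply, radialProj, map_smul]

theorem coneMeasure_eq_smul_map [μ.IsAddHaarMeasure] (φ : E ≃L[ℝ] E) (hg : Measurable g) :
    coneMeasure μ g =
      ENNReal.ofReal |LinearMap.det (φ : E →ₗ[ℝ] E)| • (coneMeasure μ (g ∘ φ)).map φ := by
  have hdet : LinearMap.det (φ : E →ₗ[ℝ] E) ≠ 0 := φ.toLinearEquiv.isUnit_det'.ne_zero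
  have hmap : μ.map φ = ENNReal.ofReal |(LinearMap.det (φ : E →ₗ[ℝ] E))⁻¹| • μ :=
    Measure.map_linearMap_addHaar_eq_smul_addHaar μ hdet
  rw [← coneMeasure_map φ hg, hmap, coneMeasure_smul_measure, smul_smul,
    ← ENNReal.ofReal_mul (abs_nonneg _), ← abs_mul, mul_inv_cancel₀ hdet, abs_one,
    ENNReal.ofReal_one, one_smul]

namespace IsAsymmetricNorm

theorem measurableSet_sublevel (hg : IsAsymmetricNorm g) : MeasurableSet {x | g x < 1} :=
  measurableSet_lt hg.continuous.measurable measurable_const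

variable [μ.IsAddHaarMeasure] [Nontrivial E]

theorem ae_coneMeasure_differentiableAt (hg : IsAsymmetricNorm g) (hf : IsAsymmetricNorm f) :
    ∀ᵐ x ∂coneMeasure μ g, DifferentiableAt ℝ f x := by
  refine (ae_map_iff (measurable_radialProj hg.continuous.measurable).aemeasurable
    (measurableSet_of_differentiableAt ℝ f)).2 (ae_restrict_of_ae ?_)
  filter_upwards [hf.ae_differentiableAt μ, Measure.ae_ne μ 0] with x hx hx0
  exact (hf.differentiableAt_smul_iff (inv_pos.2 (hg.pos hx0))).2 hx

theorem ae_coneMeasure_eq_one (hg : IsAsymmetricNorm g) : ∀ᵐ x ∂coneMeasure μ g, g x = 1 := by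
  refine (ae_map_iff (measurable_radialProj hg.continuous.measurable).aemeasurable
    hg.isCompact_level.measurableSet).2 (ae_restrict_of_ae ?_)
  filter_upwards [Measure.ae_ne μ 0] with x hx
  have := hg.pos hx
  rw [radialProj, hg.smul_of_nonneg (by positivity), inv_mul_cancel₀ this.ne']

theorem coneMeasure_apply (hg : IsAsymmetricNorm g) {A : Set E} (hA : MeasurableSet A)
    (hA1 : ∀ x ∈ A, g x = 1) : coneMeasure μ g A = μ (Ioo (0 : ℝ) 1 • A) := by
  have hproj := measurable_radialProj hg.continuous.measurable
  rw [coneMeasure, Measure.map_apply hproj hA, Measure.restrict_apply (hproj hA),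
    Ioo_smul_eq_of_level (fun t ht => hg.smul_of_nonneg ht.le) hA1]
  refine measure_congr ?_
  filter_upwards [Measure.ae_ne μ 0] with x hx
  exact propext ⟨fun h => ⟨hg.pos hx, h.2, h.1⟩, fun h => ⟨h.2.2, h.2.1⟩⟩

end IsAsymmetricNorm

end ConeMeasure

section FlatCone

open scoped Pointwise
open Module (finrank)

theorem lintegral_Ioo_zero_one_pow (m : ℕ) :
    ∫⁻ t in Ioo (0 : ℝ) 1, ENNReal.ofReal (t ^ m) = ((m + 1 : ℕ) : ℝ≥0∞)⁻¹ := by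
  rw [restrict_Ioo_eq_restrict_Ioc, ← ofReal_integral_eq_lintegral_ofReal,
    ← intervalIntegral.integral_of_le zero_le_one, integral_pow, one_pow,
    zero_pow m.succ_ne_zero, sub_zero, one_div, ENNReal.ofReal_inv_of_pos (by positivity),
    ← Nat.cast_succ, ENNReal.ofReal_natCast]
  · exact (continuous_pow m).integrableOn_Ioc
  · exact (ae_restrict_iff' measurableSet_Ioc).2 (.of_forall fun t ht => pow_nonneg ht.1.le m)

theorem exists_apply_eq_one_and_inner_eq {E : Type*} [NormedAddCommGroup E]
    [InnerProductSpace ℝ E] [FiniteDimensional ℝ E] (d : E →L[ℝ] ℝ) (hd : d ≠ 0) :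
    ∃ v : E, d v = 1 ∧ ‖v‖ = ‖d‖⁻¹ ∧ ∀ y, ⟪v, y⟫ = ‖v‖ ^ 2 * d y := by
  set w := (InnerProductSpace.toDual ℝ E).symm d
  have hdw (y : E) : d y = ⟪w, y⟫ := InnerProductSpace.toDual_symm_apply.symm
  have hnorm : ‖w‖ = ‖d‖ := LinearIsometryEquiv.norm_map _ _
  have hpos : 0 < ‖w‖ := hnorm ▸ norm_pos_iff.2 hd
  have hv : ‖(‖w‖ ^ 2)⁻¹ • w‖ = ‖w‖⁻¹ := by
    rw [norm_smul, Real.norm_of_nonneg (by positivity)]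
    field_simp
  refine ⟨(‖w‖ ^ 2)⁻¹ • w, ?_, hv.trans (congrArg _ hnorm), fun y => ?_⟩
  · rw [hdw, real_inner_smul_right, real_inner_self_eq_norm_sq, inv_mul_cancel₀ (by positivity)]
  · rw [hv, hdw, real_inner_smul_left, inv_pow]

variable (E : Type*) [NormedAddCommGroup E] [InnerProductSpace ℝ E] [MeasurableSpace E]
  [BorelSpace E]

/-- The Hausdorff measure on hypersurfaces of `E`. -/
abbrev hypersurfaceMeasure : Measure E :=
  μH[(finrank ℝ E - 1 : ℕ)]

variable [FiniteDimensional ℝ E]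

/-- The multiple of Lebesgue measure for which the cone with apex `0` over a subset `B` of a
hyperplane has measure `h * hypersurfaceMeasure E B`, where `h` is the distance of the hyperplane
from `0`. (The Hausdorff measures of Mathlib are not normalised to agree with Lebesgue measure.) -/
def conicVolume : Measure E :=
  (finrank ℝ E / Measure.addHaarScalarFactor
    (volume : Measure (EuclideanSpace ℝ (Fin (finrank ℝ E - 1)))) μH[(finrank ℝ E - 1 : ℕ)] : ℝ≥0) •
      volume

instance [Nontrivial E] : (conicVolume E).IsAddHaarMeasure :=
  .nnreal_smul _ <| div_ne_zero (Nat.cast_ne_zero.2 Module.finrank_pos.ne')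
    (Measure.addHaarScalarFactor_volume_hausdorffMeasure_ne_zero _)

variable {E}

theorem measurableSet_Ioo_smul {d : E →L[ℝ] ℝ} {B : Set E} (hB : MeasurableSet B)
    (hB1 : ∀ x ∈ B, d x = 1) : MeasurableSet (Ioo (0 : ℝ) 1 • B) := by
  have hd : Measurable d := d.continuous.measurable
  rw [Ioo_smul_eq_of_level (fun t _ x => by rw [map_smul, smul_eq_mul]) hB1]
  exact (measurableSet_lt measurable_const hd).inter
    ((measurableSet_lt hd measurable_const).inter (measurable_radialProj hd hB))

variable [Nontrivial E]

theorem volume_Ioo_smul_of_level {d : E →L[ℝ] ℝ} (hd : d ≠ 0) {B : Set E} (hB : MeasurableSet B)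
    (hB1 : ∀ x ∈ B, d x = 1) : volume (Ioo (0 : ℝ) 1 • B) =
      ENNReal.ofReal ‖d‖⁻¹ * ((finrank ℝ E : ℝ≥0∞)⁻¹ * μHE[finrank ℝ E - 1] B) := by
  obtain ⟨v, hdv, hv, hinner⟩ := exists_apply_eq_one_and_inner_eq d hd
  have hv0 : v ≠ 0 := fun h => by simp [h] at hdv
  have hslice (t : ℝ) : ((AffineSubspace.mk' (t • v +ᵥ (0 : E)) (ℝ ∙ v)ᗮ : AffineSubspace ℝ E) :
      Set E) = {x | d x = t} := by
    ext x
    rw [SetLike.mem_coe, AffineSubspace.mem_mk', Submodule.mem_orthogonal_singleton_iff_inner_right,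
      vsub_eq_sub, vadd_eq_add, add_zero, hinner, map_sub, map_smul, hdv, smul_eq_mul, mul_one,
      mul_eq_zero_iff_left (by positivity), sub_eq_zero, mem_ofPred_eq]
  have harea (t : ℝ) : μHE[finrank ℝ E - 1] (Ioo (0 : ℝ) 1 • B ∩ {x | d x = t}) =
      (Ioo (0 : ℝ) 1).indicator (fun t => ENNReal.ofReal (t ^ (finrank ℝ E - 1))) t *
        μHE[finrank ℝ E - 1] B := by
    rw [Ioo_smul_inter_level (fun s _ x => by rw [map_smul, smul_eq_mul]) hB1, indicator_apply]
    split_ifs with ht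
    · rw [Measure.euclideanHausdorffMeasure_smul₀ _ ht.1.ne', ENNReal.smul_def, smul_eq_mul,
        ENNReal.coe_pow, ENNReal.ofReal_pow ht.1.le, ← enorm_eq_nnnorm,
        Real.enorm_of_nonneg ht.1.le]
    · rw [measure_empty, zero_mul]
  rw [← InnerProductSpace.euclideanHausdorffMeasure_eq_volume,
    EuclideanGeometry.euclideanHausdorffMeasure_eq_lintegral 0 hv0 (measurableSet_Ioo_smul hB hB1),
    ← ofReal_norm, hv]
  simp only [hslice, harea]
  rw [lintegral_mul_const _ (Measurable.indicator (by fun_prop) measurableSet_Ioo),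
    lintegral_indicator measurableSet_Ioo, lintegral_Ioo_zero_one_pow,
    Nat.sub_add_cancel Module.finrank_pos]

theorem conicVolume_Ioo_smul_of_level {d : E →L[ℝ] ℝ} (hd : d ≠ 0) {B : Set E}
    (hB : MeasurableSet B) (hB1 : ∀ x ∈ B, d x = 1) :
    conicVolume E (Ioo (0 : ℝ) 1 • B) = ENNReal.ofReal ‖d‖⁻¹ * hypersurfaceMeasure E B := by
  have hfinrank : (finrank ℝ E : ℝ≥0∞) ≠ 0 := Nat.cast_ne_zero.2 Module.finrank_pos.ne'
  rw [conicVolume, Measure.smul_apply, volume_Ioo_smul_of_level hd hB hB1,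
    Measure.euclideanHausdorffMeasure_def, Measure.smul_apply, ENNReal.smul_def, ENNReal.smul_def,
    ENNReal.coe_div (Measure.addHaarScalarFactor_volume_hausdorffMeasure_ne_zero _),
    ENNReal.coe_natCast, smul_eq_mul, smul_eq_mul]
  set κ := Measure.addHaarScalarFactor
    (volume : Measure (EuclideanSpace ℝ (Fin (finrank ℝ E - 1)))) μH[(finrank ℝ E - 1 : ℕ)]
  have hκ : (κ : ℝ≥0∞) ≠ 0 :=
    ENNReal.coe_ne_zero.2 (Measure.addHaarScalarFactor_volume_hausdorffMeasure_ne_zero _)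
  calc
    _ = (finrank ℝ E * (finrank ℝ E : ℝ≥0∞)⁻¹) * ((κ : ℝ≥0∞)⁻¹ * κ) *
        (ENNReal.ofReal ‖d‖⁻¹ * hypersurfaceMeasure E B) := by
      rw [div_eq_mul_inv]
      ring
    _ = _ := by
      rw [ENNReal.mul_inv_cancel hfinrank (ENNReal.natCast_ne_top _),
        ENNReal.inv_mul_cancel hκ ENNReal.coe_ne_top, one_mul, one_mul]

end FlatCone

/-- `a` and `b` agree up to a factor `L`. -/
def AgreeUpTo (L : ℝ≥0) (a b : ℝ≥0∞) : Prop := a ≤ L * b ∧ b ≤ L * a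

namespace AgreeUpTo

variable {L L' : ℝ≥0} {a b c : ℝ≥0∞}

theorem symm (h : AgreeUpTo L a b) : AgreeUpTo L b a := ⟨h.2, h.1⟩

theorem trans (hab : AgreeUpTo L a b) (hbc : AgreeUpTo L' b c) : AgreeUpTo (L * L') a c := by
  rw [AgreeUpTo, ENNReal.coe_mul]
  constructor
  · rw [mul_assoc]
    exact hab.1.trans (by gcongr; exact hbc.1)
  · rw [mul_comm (L : ℝ≥0∞), mul_assoc]
    exact hbc.2.trans (by gcongr; exact hab.2)

theorem mul_left (h : AgreeUpTo L a b) (c : ℝ≥0∞) : AgreeUpTo L (c * a) (c * b) := by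
  rw [AgreeUpTo, mul_left_comm (L : ℝ≥0∞), mul_left_comm (L : ℝ≥0∞)]
  exact ⟨mul_le_mul_right h.1 c, mul_le_mul_right h.2 c⟩

theorem setLIntegral {α : Type*} [MeasurableSpace α] {μ : Measure α} {A : Set α}
    (hA : MeasurableSet A) {f : α → ℝ≥0∞} (h : ∀ x ∈ A, AgreeUpTo L (f x) b) :
    AgreeUpTo L (∫⁻ x in A, f x ∂μ) (b * μ A) := by
  rw [← setLIntegral_const]
  constructor <;> rw [← lintegral_const_mul' _ _ ENNReal.coe_ne_top]
  exacts [setLIntegral_mono' hA fun x hx => (h x hx).1,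
    setLIntegral_mono' hA fun x hx => (h x hx).2]

theorem eq_of_forall_pow (k : ℕ) (h : ∀ L : ℝ≥0, 1 < L → AgreeUpTo (L ^ k) a b) : a = b := by
  have hle {a b : ℝ≥0∞} (h : ∀ L : ℝ≥0, 1 < L → a ≤ (L ^ k : ℝ≥0) * b) : a ≤ b := by
    rcases eq_or_ne b ∞ with rfl | hb
    · exact le_top
    have hlim : Tendsto (fun L : ℝ≥0 => ((L ^ k : ℝ≥0) : ℝ≥0∞) * b) (𝓝[>] 1) (𝓝 b) := by
      have : Tendsto (fun L : ℝ≥0 => ((L ^ k : ℝ≥0) : ℝ≥0∞)) (𝓝[>] 1) (𝓝 1) := by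
        refine ENNReal.tendsto_coe.2 (tendsto_nhdsWithin_of_tendsto_nhds ?_)
        simpa only [one_pow, id] using (continuous_pow k).tendsto (1 : ℝ≥0)
      simpa only [one_mul] using ENNReal.Tendsto.mul_const this (Or.inr hb)
    exact ge_of_tendsto hlim (eventually_mem_nhdsWithin.mono h)
  exact le_antisymm (hle fun L hL => (h L hL).1) (hle fun L hL => (h L hL).2)

end AgreeUpTo

theorem measure_le_of_locally_le {X : Type*} [TopologicalSpace X] [SecondCountableTopology X]
    [MeasurableSpace X] [BorelSpace X] {μ ν : Measure X} {S : Set X}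
    (h : ∀ x ∈ S, ∃ U, IsOpen U ∧ x ∈ U ∧ ∀ A ⊆ S ∩ U, MeasurableSet A → μ A ≤ ν A) :
    ∀ A ⊆ S, MeasurableSet A → μ A ≤ ν A := by
  intro A hAS hA
  choose! U hUo hxU hU using h
  obtain ⟨t, htS, ht, hcover⟩ := TopologicalSpace.countable_cover_nhdsWithin
    fun x hx => mem_nhdsWithin_of_mem_nhds ((hUo x hx).mem_nhds (hxU x hx))
  rcases A.eq_empty_or_nonempty with rfl | ⟨a, ha⟩
  · simp only [measure_empty, le_refl]
  have ht0 : t.Nonempty := by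
    obtain ⟨x, hx, -⟩ := mem_iUnion₂.1 (hcover (hAS ha))
    exact ⟨x, hx⟩
  obtain ⟨x, rfl⟩ := ht.exists_eq_range ht0
  have hxS (k : ℕ) : x k ∈ S := htS (mem_range_self k)
  have hA_eq : A = ⋃ k, A ∩ disjointed (fun k => U (x k)) k := by
    rw [← inter_iUnion, iUnion_disjointed, left_eq_inter]
    simpa only [biUnion_range] using hAS.trans hcover
  have hdisj : Pairwise (Function.onFun Disjoint fun k => A ∩ disjointed (fun k => U (x k)) k) :=
    fun i j hij => (disjoint_disjointed _ hij).mono inter_subset_right inter_subset_right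
  have hmeas (k : ℕ) : MeasurableSet (A ∩ disjointed (fun k => U (x k)) k) :=
    hA.inter (MeasurableSet.disjointed (fun k => (hUo _ (hxS k)).measurableSet) k)
  rw [hA_eq, measure_iUnion hdisj hmeas, measure_iUnion hdisj hmeas]
  exact ENNReal.tsum_le_tsum fun k =>
    hU _ (hxS k) _ (inter_subset_inter hAS (disjointed_subset _ k)) (hmeas k)

section Distortion

variable {E : Type*} [NormedAddCommGroup E] [NormedSpace ℝ E]

theorem antilipschitzWith_of_approximatesLinearOn_id [Nontrivial E] {s : Set E} {f : E → E}
    {δ : ℝ≥0} (hf : ApproximatesLinearOn f (ContinuousLinearMap.id ℝ E) s δ) (hδ : δ < 1) :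
    AntilipschitzWith (1 - δ)⁻¹ (s.domRestrict f) := by
  have hsymm : ‖((ContinuousLinearEquiv.refl ℝ E).symm : E →L[ℝ] E)‖₊⁻¹ = 1 := by
    rw [← inv_one, ← ContinuousLinearMap.nnnorm_id (𝕜 := ℝ) (E := E)]
    rfl
  have := ApproximatesLinearOn.antilipschitz (f' := .refl ℝ E) hf (.inr (hsymm.symm ▸ hδ))
  rwa [hsymm] at this

theorem injOn_of_approximatesLinearOn_id [Nontrivial E] {s : Set E} {f : E → E} {δ : ℝ≥0}
    (hf : ApproximatesLinearOn f (ContinuousLinearMap.id ℝ E) s δ) (hδ : δ < 1) : InjOn f s :=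
  injOn_iff_injective.2 (antilipschitzWith_of_approximatesLinearOn_id hf hδ).injective

variable [MeasurableSpace E] [BorelSpace E]

theorem eventually_agreeUpTo_addHaar_image [FiniteDimensional ℝ E] (μ : Measure E)
    [μ.IsAddHaarMeasure] {L : ℝ≥0} (hL : 1 < L) :
    ∀ᶠ δ in 𝓝[>] (0 : ℝ≥0), ∀ (s : Set E) (f : E → E),
      ApproximatesLinearOn f (ContinuousLinearMap.id ℝ E) s δ → AgreeUpTo L (μ s) (μ (f '' s)) := by
  have hdet : ENNReal.ofReal |(ContinuousLinearMap.id ℝ E).det| = 1 := by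
    simp [ContinuousLinearMap.det]
  have hL0 : L ≠ 0 := (one_pos.trans hL).ne'
  filter_upwards [addHaar_image_le_mul_of_det_lt μ (.id ℝ E) (m := L)
      (by rw [hdet]; exact_mod_cast hL),
    mul_le_addHaar_image_of_lt_det μ (.id ℝ E) (m := L⁻¹)
      (by rw [hdet]; exact_mod_cast inv_lt_one_of_one_lt₀ hL)] with δ hupper hlower s f hf
  refine ⟨?_, hupper s f hf⟩
  rw [mul_comm, ← ENNReal.div_le_iff (by simpa) ENNReal.coe_ne_top, div_eq_mul_inv, mul_comm,
    ← ENNReal.coe_inv hL0]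
  exact hlower s f hf

theorem eventually_agreeUpTo_hausdorffMeasure_image [Nontrivial E] {d : ℝ} (hd : 0 ≤ d) {L : ℝ≥0}
    (hL : 1 < L) :
    ∀ᶠ δ in 𝓝[>] (0 : ℝ≥0), ∀ (s : Set E) (f : E → E),
      ApproximatesLinearOn f (ContinuousLinearMap.id ℝ E) s δ →
        AgreeUpTo L (μH[d] s) (μH[d] (f '' s)) := by
  have hupper : Tendsto (fun δ : ℝ≥0 => (1 + δ) ^ d) (𝓝 0) (𝓝 1) := by
    have : Tendsto (fun δ : ℝ≥0 => 1 + δ) (𝓝 0) (𝓝 1) :=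
      Continuous.tendsto' (by fun_prop) _ _ (add_zero 1)
    simpa only [NNReal.one_rpow] using this.nnrpow tendsto_const_nhds (.inl one_ne_zero)
  have hlower : Tendsto (fun δ : ℝ≥0 => ((1 - δ)⁻¹) ^ d) (𝓝 0) (𝓝 1) := by
    have : Tendsto (fun δ : ℝ≥0 => (1 - δ)⁻¹) (𝓝 0) (𝓝 1) := by
      have : Tendsto (fun δ : ℝ≥0 => 1 - δ) (𝓝 0) (𝓝 1) :=
        Continuous.tendsto' (by fun_prop) _ _ (tsub_zero 1)
      simpa only [inv_one] using this.inv₀ one_ne_zero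
    simpa only [NNReal.one_rpow] using this.nnrpow tendsto_const_nhds (.inl one_ne_zero)
  filter_upwards [nhdsWithin_le_nhds (hupper.eventually_lt_const hL),
    nhdsWithin_le_nhds (hlower.eventually_lt_const hL),
    nhdsWithin_le_nhds (gt_mem_nhds one_pos)] with δ hδu hδl hδ s f hf
  have hnorm : ‖ContinuousLinearMap.id ℝ E‖₊ = 1 := ContinuousLinearMap.nnnorm_id
  have hlip : LipschitzOnWith (1 + δ) f s :=
    lipschitzOnWith_iff_restrict.2 (hnorm ▸ hf.lipschitz)
  have hanti := antilipschitzWith_of_approximatesLinearOn_id hf hδ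
  constructor
  · have h := hanti.le_hausdorffMeasure_image hd univ
    rw [image_univ, range_domRestrict, ← isometry_subtype_coe.hausdorffMeasure_image (.inl hd),
      image_univ, Subtype.range_coe, ← ENNReal.coe_rpow_of_nonneg _ hd] at h
    exact h.trans (mul_le_mul_left (ENNReal.coe_le_coe.2 hδl.le) _)
  · exact (hlip.hausdorffMeasure_image_le hd).trans <|
      mul_le_mul_left (ENNReal.coe_rpow_of_nonneg _ hd ▸ ENNReal.coe_le_coe.2 hδu.le) _

end Distortion

section SupportHeight

variable {E : Type*} [NormedAddCommGroup E] [NormedSpace ℝ E] {g : E → ℝ} {x : E}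

open Classical in
/-- The distance from `0` to the tangent hyperplane of the level set of `g` through `x`, for `g`
asymmetric norm with `g x = 1`. The value `1` at critical points keeps it positive and finite. -/
def supportHeight (g : E → ℝ) (x : E) : ℝ≥0∞ :=
  if fderiv ℝ g x = 0 then 1 else ENNReal.ofReal ‖fderiv ℝ g x‖⁻¹

theorem supportHeight_of_fderiv_ne_zero (hx : fderiv ℝ g x ≠ 0) :
    supportHeight g x = ENNReal.ofReal ‖fderiv ℝ g x‖⁻¹ :=
  if_neg hx

theorem supportHeight_pos (g : E → ℝ) (x : E) : 0 < supportHeight g x := by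
  rw [supportHeight]
  split_ifs with h
  · exact one_pos
  · exact ENNReal.ofReal_pos.2 (inv_pos.2 (norm_pos_iff.2 h))

theorem supportHeight_lt_top (g : E → ℝ) (x : E) : supportHeight g x < ⊤ := by
  rw [supportHeight]
  split_ifs
  exacts [ENNReal.one_lt_top, ENNReal.ofReal_lt_top]

theorem measurable_supportHeight [MeasurableSpace E] [BorelSpace E] (g : E → ℝ) :
    Measurable (supportHeight g) :=
  Measurable.ite ((measurableSet_singleton 0).preimage (measurable_fderiv ℝ g)) measurable_const
    (measurable_fderiv ℝ g).norm.inv.ennreal_ofReal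

theorem eventually_agreeUpTo_inv_norm {F : Type*} [NormedAddCommGroup F] {d : F} (hd : d ≠ 0)
    {L : ℝ≥0} (hL : 1 < L) :
    ∀ᶠ e in 𝓝 d, AgreeUpTo L (ENNReal.ofReal ‖e‖⁻¹) (ENNReal.ofReal ‖d‖⁻¹) := by
  have hpos : 0 < ENNReal.ofReal ‖d‖⁻¹ := ENNReal.ofReal_pos.2 (inv_pos.2 (norm_pos_iff.2 hd))
  have hlim : Tendsto (fun e : F => ENNReal.ofReal ‖e‖⁻¹) (𝓝 d) (𝓝 (ENNReal.ofReal ‖d‖⁻¹)) :=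
    ENNReal.tendsto_ofReal (continuous_norm.continuousAt.inv₀ (norm_ne_zero_iff.2 hd)).tendsto
  have hlt : ENNReal.ofReal ‖d‖⁻¹ < L * ENNReal.ofReal ‖d‖⁻¹ := by
    simpa only [one_mul] using
      ENNReal.mul_lt_mul_left hpos.ne' ENNReal.ofReal_ne_top (ENNReal.one_lt_coe_iff.2 hL)
  filter_upwards [hlim.eventually_lt_const hlt,
    (ENNReal.Tendsto.const_mul hlim (.inr ENNReal.coe_ne_top)).eventually_const_lt hlt] with e h h'
  exact ⟨h.le, h'.le⟩

theorem IsAsymmetricNorm.fderiv_ne_zero (hg : IsAsymmetricNorm g)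
    (hx : DifferentiableAt ℝ g x) (hx1 : g x = 1) : fderiv ℝ g x ≠ 0 := fun h => by
  have := hg.fderiv_apply_self hx
  rw [h, hx1] at this
  exact zero_ne_one this

end SupportHeight

section Flattening

variable {E : Type*} [NormedAddCommGroup E] [NormedSpace ℝ E] {g : E → ℝ} {d : E →L[ℝ] ℝ} {v : E}

/-- The shear along `v` which maps the level sets of `g` to those of the linear functional `d`,
where `d v = 1`. -/
def flatten (g : E → ℝ) (d : E →L[ℝ] ℝ) (v x : E) : E := x + (g x - d x) • v

theorem apply_flatten (hdv : d v = 1) (x : E) : d (flatten g d v x) = g x := by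
  rw [flatten, map_add, map_smul, hdv, smul_eq_mul, mul_one, add_sub_cancel]

theorem IsAsymmetricNorm.flatten_smul (hg : IsAsymmetricNorm g) {t : ℝ} (ht : 0 < t) (x : E) :
    flatten g d v (t • x) = t • flatten g d v x := by
  rw [flatten, flatten, hg.smul_of_nonneg ht.le, map_smul, smul_eq_mul]
  module

theorem approximatesLinearOn_flatten {U : Set E} {c : ℝ≥0} (h : ApproximatesLinearOn g d U c) :
    ApproximatesLinearOn (flatten g d v) (ContinuousLinearMap.id ℝ E) U (c * ‖v‖₊) := by
  intro x hx y hy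
  have : flatten g d v x - flatten g d v y - (x - y) = (g x - g y - d (x - y)) • v := by
    rw [flatten, flatten, map_sub]
    module
  rw [ContinuousLinearMap.id_apply, this, norm_smul, NNReal.coe_mul, mul_right_comm]
  exact mul_le_mul_of_nonneg_right (h x hx y hy) (norm_nonneg v)

theorem norm_fderiv_sub_le_of_approximatesLinearOn {U : Set E} (hU : IsOpen U) {c : ℝ≥0}
    (h : ApproximatesLinearOn g d U c) {x : E} (hx : x ∈ U) (hgx : DifferentiableAt ℝ g x) :
    ‖fderiv ℝ g x - d‖ ≤ c :=
  (hgx.hasFDerivAt.sub d.hasFDerivAt).le_of_lipschitzOn (hU.mem_nhds hx)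
    (ApproximatesLinearOn.approximatesLinearOn_iff_lipschitzOnWith.1 h)

theorem IsAsymmetricNorm.exists_isOpen_approximatesLinearOn_flatten
    (hg : IsAsymmetricNorm g) {x₀ : E}
    (hx₀ : DifferentiableAt ℝ g x₀) (hx₀0 : x₀ ≠ 0) {δ : ℝ≥0} (hδ : 0 < δ) {r : ℝ} (hr : 0 < r) :
    ∃ U, IsOpen U ∧ x₀ ∈ U ∧ (∀ t > (0 : ℝ), ∀ x ∈ U, t • x ∈ U) ∧
      ApproximatesLinearOn (flatten g (fderiv ℝ g x₀) x₀) (.id ℝ E) U δ ∧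
      ∀ x ∈ U, DifferentiableAt ℝ g x → dist (fderiv ℝ g x) (fderiv ℝ g x₀) < r := by
  have hx₀' : 0 < ‖x₀‖₊ := nnnorm_pos.2 hx₀0
  obtain ⟨c, hc, hcr, hcδ⟩ : ∃ c : ℝ≥0, 0 < c ∧ c < r ∧ c * ‖x₀‖₊ ≤ δ := by
    refine ⟨min (r / 2).toNNReal (δ / ‖x₀‖₊), lt_min (by simpa) (div_pos hδ hx₀'), ?_, ?_⟩
    · have := min_le_left (r / 2).toNNReal (δ / ‖x₀‖₊)
      rw [← NNReal.coe_le_coe, Real.coe_toNNReal _ (by positivity)] at this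
      linarith
    · exact (le_div_iff₀ hx₀').1 (min_le_right _ _)
  obtain ⟨U, hU, hx₀U, hcone, happrox⟩ := hg.exists_isOpen_approximatesLinearOn hx₀ hc
  refine ⟨U, hU, hx₀U, hcone, (approximatesLinearOn_flatten happrox).mono_num hcδ,
    fun x hx hgx => ?_⟩
  rw [dist_eq_norm]
  exact (norm_fderiv_sub_le_of_approximatesLinearOn hU happrox hx hgx).trans_lt hcr

end Flattening

section LocalConeFormula

open scoped Pointwise

variable {E : Type*} [NormedAddCommGroup E] [InnerProductSpace ℝ E] [FiniteDimensional ℝ E]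
  [Nontrivial E] [MeasurableSpace E] [BorelSpace E] {g : E → ℝ}

namespace IsAsymmetricNorm

theorem conicVolume_flatten_image (hg : IsAsymmetricNorm g) {d : E →L[ℝ] ℝ} {v : E} (hdv : d v = 1)
    {A : Set E} (hA : MeasurableSet A) (hinj : InjOn (flatten g d v) A) (hA1 : ∀ x ∈ A, g x = 1) :
    conicVolume E (flatten g d v '' (Ioo (0 : ℝ) 1 • A)) =
      ENNReal.ofReal ‖d‖⁻¹ * hypersurfaceMeasure E (flatten g d v '' A) := by
  have hd : d ≠ 0 := fun h => by simp [h] at hdv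
  have hmeas : Measurable (flatten g d v) := by
    have := hg.continuous.measurable
    unfold flatten
    fun_prop
  rw [image_Ioo_smul fun t ht => hg.flatten_smul ht]
  refine conicVolume_Ioo_smul_of_level hd (hA.image_of_measurable_injOn hmeas hinj) ?_
  rintro _ ⟨x, hx, rfl⟩
  rw [apply_flatten hdv, hA1 x hx]

theorem exists_isOpen_agreeUpTo (hg : IsAsymmetricNorm g) {x₀ : E}
    (hx₀ : DifferentiableAt ℝ g x₀) (hx₀1 : g x₀ = 1) {L : ℝ≥0} (hL : 1 < L) :
    ∃ U, IsOpen U ∧ x₀ ∈ U ∧ ∀ A ⊆ {x | g x = 1 ∧ DifferentiableAt ℝ g x} ∩ U, MeasurableSet A →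
      AgreeUpTo (L ^ 3) (coneMeasure (conicVolume E) g A)
        (∫⁻ x in A, supportHeight g x ∂hypersurfaceMeasure E) := by
  set d := fderiv ℝ g x₀
  have hdx₀ : d x₀ = 1 := (hg.fderiv_apply_self hx₀).trans hx₀1
  obtain ⟨r, hr, hheight⟩ := Metric.eventually_nhds_iff.1
    (eventually_agreeUpTo_inv_norm (hg.fderiv_ne_zero hx₀ hx₀1) hL)
  obtain ⟨δ, ⟨hvol, harea, hδ1⟩, hδ⟩ :=
    ((eventually_agreeUpTo_addHaar_image (conicVolume E) hL).and
      ((eventually_agreeUpTo_hausdorffMeasure_image (E := E)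
        (d := (Module.finrank ℝ E - 1 : ℕ)) (Nat.cast_nonneg _) hL).and
      (nhdsWithin_le_nhds (gt_mem_nhds one_pos)))).and self_mem_nhdsWithin |>.exists
  obtain ⟨U, hU, hx₀U, hcone, hflat, hfderiv⟩ :=
    hg.exists_isOpen_approximatesLinearOn_flatten hx₀ (hg.ne_zero_of_pos (hx₀1 ▸ one_pos)) hδ hr
  refine ⟨U, hU, hx₀U, fun A hAU hA => ?_⟩
  have hA1 : ∀ x ∈ A, g x = 1 := fun x hx => (hAU hx).1.1
  have hflatA := hflat.mono_set fun x hx => (hAU hx).2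
  have hflat_cone := hflat.mono_set (s := Ioo (0 : ℝ) 1 • A) <| by
    rintro _ ⟨t, ht, x, hx, rfl⟩
    exact hcone t ht.1 x (hAU hx).2
  have hheightA : ∀ x ∈ A, AgreeUpTo L (supportHeight g x) (ENNReal.ofReal ‖d‖⁻¹) := fun x hx => by
    obtain ⟨⟨hx1, hx'⟩, hxU⟩ := hAU hx
    rw [supportHeight_of_fderiv_ne_zero (hg.fderiv_ne_zero hx' hx1)]
    exact hheight (hfderiv x hxU hx')
  have hconeA := hvol _ _ hflat_cone
  rw [hg.conicVolume_flatten_image hdx₀ hA (injOn_of_approximatesLinearOn_id hflatA hδ1) hA1,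
    ← hg.coneMeasure_apply hA hA1] at hconeA
  rw [pow_three', mul_assoc]
  exact hconeA.trans <| ((harea _ _ hflatA).symm.mul_left _).trans
    (AgreeUpTo.setLIntegral hA hheightA).symm

end IsAsymmetricNorm

end LocalConeFormula

section RadialProjection

variable {E : Type*} [NormedAddCommGroup E] [NormedSpace ℝ E] [FiniteDimensional ℝ E] {g : E → ℝ}

theorem IsAsymmetricNorm.exists_lipschitzOnWith_radialProj (hg : IsAsymmetricNorm g) :
    ∃ C, LipschitzOnWith C (radialProj g) (sphere 0 1) := by
  obtain ⟨r, hr, hlower⟩ := hg.exists_mul_norm_le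
  obtain ⟨C, hC⟩ := hg.exists_lipschitzWith
  refine ⟨(r⁻¹ + C / (r * r)).toNNReal, LipschitzOnWith.of_dist_le_mul fun x hx y hy => ?_⟩
  have hle {z : E} (hz : z ∈ sphere (0 : E) 1) : r ≤ g z := by
    simpa only [mem_sphere_zero_iff_norm.1 hz, mul_one] using hlower z
  have hx0 := hr.trans_le (hle hx)
  have hy0 := hr.trans_le (hle hy)
  rw [Real.coe_toNNReal _ (by positivity), add_mul]
  refine (dist_triangle _ ((g x)⁻¹ • y) _).trans (add_le_add ?_ ?_)
  · rw [radialProj, dist_smul₀, Real.norm_of_nonneg (by positivity)]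
    gcongr
    exact hle hx
  · rw [radialProj, dist_eq_norm, ← sub_smul, norm_smul, mem_sphere_zero_iff_norm.1 hy, mul_one,
      ← dist_eq_norm, dist_inv_inv₀ hx0.ne' hy0.ne', Real.norm_of_nonneg hx0.le,
      Real.norm_of_nonneg hy0.le, div_mul_eq_mul_div]
    gcongr
    exacts [hC.dist_le_mul x y, hle hx, hle hy]

end RadialProjection

section ConeFormula

variable {E : Type*} [NormedAddCommGroup E] [InnerProductSpace ℝ E] [FiniteDimensional ℝ E]
  [Nontrivial E] [MeasurableSpace E] [BorelSpace E] {g : E → ℝ}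

theorem IsAsymmetricNorm.coneMeasure_apply_eq_setLIntegral (hg : IsAsymmetricNorm g) {A : Set E}
    (hA : MeasurableSet A) (hA1 : ∀ x ∈ A, g x = 1) (hAd : ∀ x ∈ A, DifferentiableAt ℝ g x) :
    coneMeasure (conicVolume E) g A = ∫⁻ x in A, supportHeight g x ∂hypersurfaceMeasure E := by
  set W := (hypersurfaceMeasure E).withDensity (supportHeight g)
  have hAS : A ⊆ {x | g x = 1 ∧ DifferentiableAt ℝ g x} := fun x hx => ⟨hA1 x hx, hAd x hx⟩
  rw [← withDensity_apply _ hA]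
  refine AgreeUpTo.eq_of_forall_pow 3 fun L hL => ?_
  have hlocal : ∀ x ∈ {x | g x = 1 ∧ DifferentiableAt ℝ g x}, ∃ U, IsOpen U ∧ x ∈ U ∧
      ∀ B ⊆ {x | g x = 1 ∧ DifferentiableAt ℝ g x} ∩ U, MeasurableSet B →
        AgreeUpTo (L ^ 3) (coneMeasure (conicVolume E) g B) (W B) := fun x hx => by
    obtain ⟨U, hU, hxU, h⟩ := hg.exists_isOpen_agreeUpTo hx.2 hx.1 hL
    exact ⟨U, hU, hxU, fun B hB hBm => by rw [withDensity_apply _ hBm]; exact h B hB hBm⟩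
  constructor
  · refine measure_le_of_locally_le (ν := ((L ^ 3 : ℝ≥0) : ℝ≥0∞) • W) (fun x hx => ?_) A hAS hA
    obtain ⟨U, hU, hxU, h⟩ := hlocal x hx
    exact ⟨U, hU, hxU, fun B hB hBm => (h B hB hBm).1⟩
  · refine measure_le_of_locally_le (ν := ((L ^ 3 : ℝ≥0) : ℝ≥0∞) • coneMeasure (conicVolume E) g)
      (fun x hx => ?_) A hAS hA
    obtain ⟨U, hU, hxU, h⟩ := hlocal x hx
    exact ⟨U, hU, hxU, fun B hB hBm => (h B hB hBm).2⟩

theorem coneMeasure_conicVolume_norm :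
    coneMeasure (conicVolume E) norm = (hypersurfaceMeasure E).restrict (sphere 0 1) := by
  have hsphere : MeasurableSet (sphere (0 : E) 1) := isClosed_sphere.measurableSet
  have hnorm : ∀ᵐ x ∂coneMeasure (conicVolume E) norm, x ∈ sphere (0 : E) 1 := by
    simpa only [mem_sphere_zero_iff_norm] using (isAsymmetricNorm_norm E).ae_coneMeasure_eq_one
  ext A hA
  have hd {x : E} (hx : x ∈ A ∩ sphere 0 1) : DifferentiableAt ℝ (norm : E → ℝ) x :=
    (contDiffAt_norm ℝ (ne_of_mem_sphere hx.2 one_ne_zero)).differentiableAt one_ne_zero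
  have hheight {x : E} (hx : x ∈ A ∩ sphere 0 1) : supportHeight norm x = 1 := by
    have hfderiv : ‖fderiv ℝ norm x‖ = 1 := norm_fderiv_norm (hd hx)
    rw [supportHeight_of_fderiv_ne_zero (norm_ne_zero_iff.1 (hfderiv ▸ one_ne_zero)), hfderiv,
      inv_one, ENNReal.ofReal_one]
  have hAS := hA.inter hsphere
  rw [Measure.restrict_apply hA, ← Measure.restrict_eq_self_of_ae_mem hnorm,
    Measure.restrict_apply hA,
    (isAsymmetricNorm_norm E).coneMeasure_apply_eq_setLIntegral hAS
      (fun x hx => mem_sphere_zero_iff_norm.1 hx.2) fun x => hd,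
    setLIntegral_congr_fun hAS fun x => hheight, setLIntegral_one]

namespace IsAsymmetricNorm

theorem ae_hypersurfaceMeasure_differentiableAt (hg : IsAsymmetricNorm g) :
    ∀ᵐ x ∂(hypersurfaceMeasure E).restrict {x | g x = 1}, DifferentiableAt ℝ g x := by
  set N := {x | ¬ DifferentiableAt ℝ g x} ∩ sphere (0 : E) 1
  have hnondiff : MeasurableSet {x | ¬ DifferentiableAt ℝ g x} :=
    (measurableSet_of_differentiableAt ℝ g).compl
  have hN : hypersurfaceMeasure E N = 0 := by
    have := (isAsymmetricNorm_norm E).ae_coneMeasure_differentiableAt (μ := conicVolume E) hg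
    rwa [coneMeasure_conicVolume_norm, ae_iff, Measure.restrict_apply hnondiff] at this
  obtain ⟨C, hC⟩ := hg.exists_lipschitzOnWith_radialProj
  have himage : hypersurfaceMeasure E (radialProj g '' N) = 0 := by
    have := (hC.mono inter_subset_right).hausdorffMeasure_image_le (s := N)
      (d := (Module.finrank ℝ E - 1 : ℕ)) (Nat.cast_nonneg _)
    rwa [hN, mul_zero, nonpos_iff_eq_zero] at this
  rw [ae_iff, Measure.restrict_apply hnondiff]
  refine measure_mono_null ?_ himage
  rintro x ⟨hx, hx1 : g x = 1⟩
  have hx0 : 0 < ‖x‖ := norm_pos_iff.2 (hg.ne_zero_of_pos (hx1 ▸ one_pos))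
  refine ⟨‖x‖⁻¹ • x, ⟨fun h => hx ((hg.differentiableAt_smul_iff (by positivity)).1 h), ?_⟩, ?_⟩
  · rw [mem_sphere_zero_iff_norm, norm_smul, norm_inv, norm_norm, inv_mul_cancel₀ hx0.ne']
  · rw [radialProj, hg.smul_of_nonneg (by positivity), hx1, mul_one, inv_inv,
      smul_inv_smul₀ hx0.ne']

theorem coneMeasure_eq_withDensity (hg : IsAsymmetricNorm g) :
    coneMeasure (conicVolume E) g =
      ((hypersurfaceMeasure E).restrict {x | g x = 1}).withDensity (supportHeight g) := by
  set S := {x | g x = 1 ∧ DifferentiableAt ℝ g x}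
  have hlevel : MeasurableSet {x | g x = 1} := hg.isCompact_level.measurableSet
  have hS : MeasurableSet S := hlevel.inter (measurableSet_of_differentiableAt ℝ g)
  have hcone : ∀ᵐ x ∂coneMeasure (conicVolume E) g, x ∈ S :=
    hg.ae_coneMeasure_eq_one.and (hg.ae_coneMeasure_differentiableAt hg)
  have hsurface : ∀ᵐ x ∂(hypersurfaceMeasure E).restrict {x | g x = 1}, x ∈ S :=
    (ae_restrict_mem hlevel).and hg.ae_hypersurfaceMeasure_differentiableAt
  rw [← Measure.restrict_eq_self_of_ae_mem hcone, ← Measure.restrict_eq_self_of_ae_mem hsurface,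
    Measure.restrict_restrict hS, inter_eq_left.2 fun x hx => hx.1]
  ext A hA
  rw [Measure.restrict_apply hA, withDensity_apply _ hA, Measure.restrict_restrict hA]
  exact hg.coneMeasure_apply_eq_setLIntegral (hA.inter hS) (fun x hx => hx.2.1) fun x hx => hx.2.2

end IsAsymmetricNorm

end ConeFormula

section Polar

open Module (finrank)

theorem volumeIoiPow_setOf_mul_lt_one (m : ℕ) {c : ℝ} (hc : 0 < c) :
    Measure.volumeIoiPow m {r : Ioi (0 : ℝ) | r * c < 1} =
      ENNReal.ofReal c⁻¹ ^ (m + 1) * ((m + 1 : ℕ) : ℝ≥0∞)⁻¹ := by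
  have hset : {r : Ioi (0 : ℝ) | r * c < 1} = Iio (⟨c⁻¹, inv_pos.2 hc⟩ : Ioi (0 : ℝ)) := by
    ext r
    change (r : ℝ) * c < 1 ↔ (r : ℝ) < c⁻¹
    rw [← one_div, lt_div_iff₀ hc]
  rw [hset, Measure.volumeIoiPow_apply_Iio, ENNReal.ofReal_div_of_pos (by positivity),
    ENNReal.ofReal_pow (by positivity), div_eq_mul_inv, ← Nat.cast_succ, ENNReal.ofReal_natCast]

variable {E : Type*} [NormedAddCommGroup E] [NormedSpace ℝ E] [FiniteDimensional ℝ E]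
  [Nontrivial E] [MeasurableSpace E] [BorelSpace E] {μ : Measure E} [μ.IsAddHaarMeasure]
  {g : E → ℝ}

namespace IsAsymmetricNorm

theorem lintegral_coneMeasure (hg : IsAsymmetricNorm g) {F : E → ℝ≥0∞} (hF : Measurable F) :
    ∫⁻ x, F x ∂coneMeasure μ g = ∫⁻ θ : sphere (0 : E) 1, F (radialProj g θ) *
      (ENNReal.ofReal (g θ)⁻¹ ^ finrank ℝ E * (finrank ℝ E : ℝ≥0∞)⁻¹) ∂μ.toSphere := by
  have hproj := measurable_radialProj hg.continuous.measurable
  have hsublevel := hg.measurableSet_sublevel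
  set H : E → ℝ≥0∞ := {x | g x < 1}.indicator fun x => F (radialProj g x)
  have hH : Measurable H := (hF.comp hproj).indicator hsublevel
  have hfinrank : finrank ℝ E - 1 + 1 = finrank ℝ E := Nat.sub_add_cancel Module.finrank_pos
  have hray (θ : sphere (0 : E) 1) (r : Ioi (0 : ℝ)) : H ((r : ℝ) • (θ : E)) =
      {r : Ioi (0 : ℝ) | r * g θ < 1}.indicator (fun _ => F (radialProj g θ)) r := by
    simp only [H, indicator, mem_ofPred_eq, hg.smul_of_nonneg (le_of_lt r.2),
      hg.radialProj_smul r.2]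
  calc ∫⁻ x, F x ∂coneMeasure μ g
    _ = ∫⁻ x in {0}ᶜ, H x ∂μ := by
      rw [restrict_compl_singleton, lintegral_indicator hsublevel, coneMeasure,
        lintegral_map hF hproj]
    _ = ∫⁻ y : sphere (0 : E) 1 × Ioi (0 : ℝ), H ((y.2 : ℝ) • (y.1 : E))
        ∂μ.toSphere.prod (Measure.volumeIoiPow (finrank ℝ E - 1)) := by
      rw [← lintegral_subtype_comap (measurableSet_singleton _).compl,
        ← μ.measurePreserving_homeomorphUnitSphereProd.lintegral_comp_emb
          (Homeomorph.measurableEmbedding _)]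
      refine lintegral_congr fun x => ?_
      rw [← homeomorphUnitSphereProd_symm_apply_coe, Homeomorph.symm_apply_apply]
    _ = _ := by
      rw [lintegral_prod _ (by fun_prop)]
      refine lintegral_congr fun θ => ?_
      have hθ : 0 < g θ := hg.pos (ne_of_mem_sphere θ.2 one_ne_zero)
      simp only [hray]
      rw [lintegral_indicator_const (measurableSet_lt (by fun_prop) measurable_const),
        volumeIoiPow_setOf_mul_lt_one _ hθ, hfinrank]

theorem coneMeasure_eq_map_radialProj (hg : IsAsymmetricNorm g) :
    coneMeasure μ g = ((coneMeasure μ norm).withDensity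
      fun x => ENNReal.ofReal (g x)⁻¹ ^ finrank ℝ E).map (radialProj g) := by
  have hproj := measurable_radialProj hg.continuous.measurable
  have hdensity : Measurable fun x => ENNReal.ofReal (g x)⁻¹ ^ finrank ℝ E :=
    hg.continuous.measurable.inv.ennreal_ofReal.pow_const _
  refine Measure.ext_of_lintegral _ fun F hF => ?_
  have hFproj : Measurable fun x => F (radialProj g x) := hF.comp hproj
  rw [lintegral_map hF hproj, lintegral_withDensity_eq_lintegral_mul _ hdensity hFproj,
    hg.lintegral_coneMeasure hF, (isAsymmetricNorm_norm E).lintegral_coneMeasure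
    (hdensity.mul hFproj)]
  refine lintegral_congr fun θ => ?_
  have hθ : ‖(θ : E)‖ = 1 := mem_sphere_zero_iff_norm.1 θ.2
  simp only [Pi.mul_apply, radialProj, hθ, inv_one, one_smul, ENNReal.ofReal_one, one_pow, one_mul]
  ring

end IsAsymmetricNorm

end Polar

theorem fderiv_eq_of_forall_apply_le {E : Type*} [NormedAddCommGroup E] [NormedSpace ℝ E]
    {f : E → ℝ} {x : E} (hx : DifferentiableAt ℝ f x) {ℓ : E →L[ℝ] ℝ} (hle : ∀ z, ℓ z ≤ f z)
    (heq : ℓ x = f x) : fderiv ℝ f x = ℓ := by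
  have hmin : IsLocalMin (fun z => f z - ℓ z) x := .of_forall fun z => by
    simpa only [heq, sub_self, sub_nonneg] using hle z
  have hzero := hmin.hasFDerivAt_eq_zero (hx.hasFDerivAt.sub ℓ.hasFDerivAt)
  exact sub_eq_zero.1 hzero

theorem isAsymmetricNorm_gauge {E : Type*} [NormedAddCommGroup E] [NormedSpace ℝ E] {K : Set E}
    (hconvex : Convex ℝ K) (hbounded : Bornology.IsBounded K) (hK : K ∈ 𝓝 0) :
    IsAsymmetricNorm (gauge K) where
  add_le := gauge_add_le hconvex (absorbent_nhds_zero hK)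
  smul_of_nonneg ht x := by rw [gauge_smul_of_nonneg ht, smul_eq_mul]
  pos hx := (gauge_pos (absorbent_nhds_zero hK)
    (NormedSpace.isVonNBounded_iff ℝ |>.2 hbounded)).2 hx

section ConvexBody

variable {n : ℕ} {K : Set (Euc n)} {x y u : Euc n}

namespace IsConvexBody

theorem isAsymmetricNorm_gauge (hK : IsConvexBody K) (h0 : 0 ∈ interior K) :
    IsAsymmetricNorm (gauge K) :=
  _root_.isAsymmetricNorm_gauge hK.2.1 hK.1.isBounded (mem_interior_iff_mem_nhds.1 h0)

theorem gauge_le_one_iff (hK : IsConvexBody K) (h0 : 0 ∈ interior K) :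
    gauge K x ≤ 1 ↔ x ∈ K := by
  rw [gauge_le_one_iff_mem_closure hK.2.1 (mem_interior_iff_mem_nhds.1 h0),
    hK.1.isClosed.closure_eq]

theorem frontier_eq (hK : IsConvexBody K) (h0 : 0 ∈ interior K) :
    frontier K = {x | gauge K x = 1} :=
  Set.ext fun _ =>
    (gauge_eq_one_iff_mem_frontier hK.2.1 (mem_interior_iff_mem_nhds.1 h0)).symm

theorem inner_le_suppFn (hK : IsConvexBody K) (hy : y ∈ K) (u : Euc n) :
    ⟪y, u⟫ ≤ suppFn K u :=
  le_csSup (hK.1.image (by fun_prop)).bddAbove (mem_image_of_mem _ hy)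

theorem exists_inner_eq_suppFn (hK : IsConvexBody K) (u : Euc n) :
    ∃ x ∈ K, ⟪x, u⟫ = suppFn K u :=
  (hK.1.image (f := fun y : Euc n => ⟪y, u⟫) (by fun_prop)).sSup_mem
    ((hK.2.2.mono interior_subset).image _)

theorem isAsymmetricNorm_suppFn (hK : IsConvexBody K) (h0 : 0 ∈ interior K) :
    IsAsymmetricNorm (suppFn K) where
  add_le u v := by
    obtain ⟨x, hx, hxuv⟩ := hK.exists_inner_eq_suppFn (u + v)
    rw [← hxuv, inner_add_right]
    exact add_le_add (hK.inner_le_suppFn hx u) (hK.inner_le_suppFn hx v)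
  smul_of_nonneg {t} ht u := by
    obtain ⟨x, hx, hxu⟩ := hK.exists_inner_eq_suppFn (t • u)
    obtain ⟨y, hy, hyu⟩ := hK.exists_inner_eq_suppFn u
    refine le_antisymm ?_ ?_
    · rw [← hxu, inner_smul_right]
      exact mul_le_mul_of_nonneg_left (hK.inner_le_suppFn hx u) ht
    · rw [← hyu, ← inner_smul_right]
      exact hK.inner_le_suppFn hy _
  pos {u} hu := by
    have habsorbent : Absorbent ℝ K := absorbent_nhds_zero (mem_interior_iff_mem_nhds.1 h0)
    obtain ⟨r, hr, y, hy, rfl⟩ := habsorbent.gauge_set_nonempty (x := u)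
    have hy0 : y ≠ 0 := fun h => hu (by simp only [h, smul_zero])
    calc 0 < r * ⟪y, y⟫ := mul_pos hr (real_inner_self_pos.2 hy0)
      _ = ⟪y, r • y⟫ := (inner_smul_right _ _ _).symm
      _ ≤ _ := hK.inner_le_suppFn hy _

theorem inner_le_suppFn_mul_gauge (hK : IsConvexBody K) (h0 : 0 ∈ interior K) (z u : Euc n) :
    ⟪z, u⟫ ≤ suppFn K u * gauge K z := by
  have hgauge := hK.isAsymmetricNorm_gauge h0
  rcases eq_or_ne z 0 with rfl | hz
  · rw [inner_zero_left, hgauge.map_zero, mul_zero]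
  have hpos := hgauge.pos hz
  have hmem : (gauge K z)⁻¹ • z ∈ K := by
    rw [← hK.gauge_le_one_iff h0, hgauge.smul_of_nonneg (by positivity), inv_mul_cancel₀ hpos.ne']
  have hle := hK.inner_le_suppFn hmem u
  rwa [real_inner_smul_left, inv_mul_le_iff₀ hpos, mul_comm] at hle

theorem gauge_eq_one_of_inner_eq_suppFn (hK : IsConvexBody K) (h0 : 0 ∈ interior K)
    (hx : x ∈ K) (hu : u ≠ 0) (hxu : ⟪x, u⟫ = suppFn K u) : gauge K x = 1 := by
  refine le_antisymm ((hK.gauge_le_one_iff h0).2 hx) ?_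
  have hle := hK.inner_le_suppFn_mul_gauge h0 x u
  rwa [hxu, le_mul_iff_one_le_right ((hK.isAsymmetricNorm_suppFn h0).pos hu)] at hle

theorem isOuterNormalAt_iff (hK : IsConvexBody K) (h0 : 0 ∈ interior K) (hu : u ≠ 0) :
    IsOuterNormalAt K u x ↔ x ∈ K ∧ ⟪x, u⟫ = suppFn K u := by
  constructor
  · rintro ⟨hfrontier, hmax⟩
    have hx : x ∈ K := hK.1.isClosed.frontier_subset hfrontier
    obtain ⟨y, hy, hyu⟩ := hK.exists_inner_eq_suppFn u
    exact ⟨hx, le_antisymm (hK.inner_le_suppFn hx u) (hyu ▸ hmax y hy)⟩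
  · rintro ⟨hx, hxu⟩
    refine ⟨?_, fun y hy => hxu ▸ hK.inner_le_suppFn hy u⟩
    rw [hK.frontier_eq h0]
    exact hK.gauge_eq_one_of_inner_eq_suppFn h0 hx hu hxu

theorem eq_gradient_suppFn (hK : IsConvexBody K) (hx : x ∈ K) (hxu : ⟪x, u⟫ = suppFn K u)
    (hu : DifferentiableAt ℝ (suppFn K) u) : x = gradient (suppFn K) u := by
  have hfderiv : fderiv ℝ (suppFn K) u = innerSL ℝ x :=
    fderiv_eq_of_forall_apply_le hu (fun z => hK.inner_le_suppFn hx z) hxu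
  rw [gradient, hfderiv, LinearIsometryEquiv.eq_symm_apply]
  rfl

theorem gradient_suppFn_mem_and_inner_eq (hK : IsConvexBody K)
    (hu : DifferentiableAt ℝ (suppFn K) u) :
    gradient (suppFn K) u ∈ K ∧ ⟪gradient (suppFn K) u, u⟫ = suppFn K u := by
  obtain ⟨x, hx, hxu⟩ := hK.exists_inner_eq_suppFn u
  rw [← hK.eq_gradient_suppFn hx hxu hu]
  exact ⟨hx, hxu⟩

theorem gaussMapInv_eq_gradient (hK : IsConvexBody K) (h0 : 0 ∈ interior K) (hu : u ≠ 0)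
    (hdiff : DifferentiableAt ℝ (suppFn K) u) : gaussMapInv K u = gradient (suppFn K) u := by
  have hex : ∃ x, IsOuterNormalAt K u x :=
    ⟨_, (hK.isOuterNormalAt_iff h0 hu).2 (hK.gradient_suppFn_mem_and_inner_eq hdiff)⟩
  rw [gaussMapInv, dif_pos hex]
  obtain ⟨hmem, hinner⟩ := (hK.isOuterNormalAt_iff h0 hu).1 hex.choose_spec
  exact hK.eq_gradient_suppFn hmem hinner hdiff

theorem supportHeight_gauge (hK : IsConvexBody K) (h0 : 0 ∈ interior K) (hx : x ∈ K) (hu : u ≠ 0)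
    (hxu : ⟪x, u⟫ = suppFn K u) (hdiff : DifferentiableAt ℝ (gauge K) x) :
    supportHeight (gauge K) x = ENNReal.ofReal (suppFn K u / ‖u‖) := by
  have hpos := (hK.isAsymmetricNorm_suppFn h0).pos hu
  have hgauge := hK.gauge_eq_one_of_inner_eq_suppFn h0 hx hu hxu
  have hfderiv : fderiv ℝ (gauge K) x = (suppFn K u)⁻¹ • innerSL ℝ u := by
    refine fderiv_eq_of_forall_apply_le hdiff (fun z => ?_) ?_
    · change (suppFn K u)⁻¹ * ⟪u, z⟫ ≤ gauge K z
      rw [inv_mul_le_iff₀ hpos, real_inner_comm]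
      exact hK.inner_le_suppFn_mul_gauge h0 z u
    · change (suppFn K u)⁻¹ * ⟪u, x⟫ = gauge K x
      rw [real_inner_comm, hxu, hgauge, inv_mul_cancel₀ hpos.ne']
  rw [supportHeight_of_fderiv_ne_zero
    ((hK.isAsymmetricNorm_gauge h0).fderiv_ne_zero hdiff hgauge), hfderiv, norm_smul,
    innerSL_apply_norm, norm_inv, Real.norm_of_nonneg hpos.le, mul_inv_rev, inv_inv, mul_comm,
    div_eq_mul_inv]

theorem exists_isOuterNormalAt (hK : IsConvexBody K) (h0 : 0 ∈ interior K) (hx : gauge K x = 1)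
    (hdiff : DifferentiableAt ℝ (gauge K) x) : ∃ u, ‖u‖ = 1 ∧ IsOuterNormalAt K u x := by
  have hgauge := hK.isAsymmetricNorm_gauge h0
  have hne : gradient (gauge K) x ≠ 0 := fun h =>
    hgauge.fderiv_ne_zero hdiff hx ((InnerProductSpace.toDual ℝ (Euc n)).symm.map_eq_zero_iff.1 h)
  refine ⟨‖gradient (gauge K) x‖⁻¹ • gradient (gauge K) x, norm_smul_inv_norm hne, ?_,
    fun y hy => ?_⟩
  · rw [hK.frontier_eq h0]
    exact hx
  · rw [inner_smul_right, inner_smul_right, inner_gradient_right, inner_gradient_right,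
      hgauge.fderiv_apply_self hdiff, hx]
    gcongr
    exact (hgauge.fderiv_apply_le hdiff y).trans ((hK.gauge_le_one_iff h0).2 hy)

theorem ofReal_suppFn_gaussMap (hK : IsConvexBody K) (h0 : 0 ∈ interior K) (hx : gauge K x = 1)
    (hdiff : DifferentiableAt ℝ (gauge K) x) :
    ENNReal.ofReal (suppFn K (gaussMap K x)) = supportHeight (gauge K) x := by
  have hex := hK.exists_isOuterNormalAt h0 hx hdiff
  rw [gaussMap, dif_pos hex]
  obtain ⟨hnorm, hnormal⟩ := hex.choose_spec
  have hne : hex.choose ≠ 0 := norm_ne_zero_iff.1 (hnorm.trans_ne one_ne_zero)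
  obtain ⟨hmem, hinner⟩ := (hK.isOuterNormalAt_iff h0 hne).1 hnormal
  rw [hK.supportHeight_gauge h0 hmem hne hinner hdiff, hnorm, div_one]

theorem supportHeight_gradient_suppFn (hK : IsConvexBody K) (h0 : 0 ∈ interior K)
    (hu : ‖u‖ = 1) (hdiff : DifferentiableAt ℝ (suppFn K) u)
    (hdiff' : DifferentiableAt ℝ (gauge K) (gradient (suppFn K) u)) :
    supportHeight (gauge K) (gradient (suppFn K) u) = ENNReal.ofReal (suppFn K u) := by
  obtain ⟨hmem, hinner⟩ := hK.gradient_suppFn_mem_and_inner_eq hdiff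
  rw [hK.supportHeight_gauge h0 hmem (norm_ne_zero_iff.1 (hu.trans_ne one_ne_zero)) hinner hdiff',
    hu, div_one]

end IsConvexBody

end ConvexBody

theorem measurable_gradient {E : Type*} [NormedAddCommGroup E] [InnerProductSpace ℝ E]
    [CompleteSpace E] [MeasurableSpace E] [BorelSpace E] (f : E → ℝ) : Measurable (gradient f) :=
  (InnerProductSpace.toDual ℝ E).symm.continuous.measurable.comp (measurable_fderiv ℝ f)

theorem IsAsymmetricNorm.gradient_radialProj {E : Type*} [NormedAddCommGroup E]
    [InnerProductSpace ℝ E] [CompleteSpace E] {h : E → ℝ} (hh : IsAsymmetricNorm h) (x : E) :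
    gradient h (radialProj h x) = gradient h x := by
  rcases eq_or_ne x 0 with rfl | hx
  · rw [radialProj, smul_zero]
  · rw [radialProj, gradient, gradient, hh.fderiv_smul (inv_pos.2 (hh.pos hx))]

/-- The cone measure of the polar body `{suppFn K ≤ 1}`, transported to the boundary of `K` by
the gradient of the support function. -/
def dualConeMeasure {n : ℕ} (K : Set (Euc n)) : Measure (Euc n) :=
  (coneMeasure (conicVolume (Euc n)) (suppFn K)).map (gradient (suppFn K))

section Curvature

variable {n : ℕ} {K : Set (Euc n)} [Nontrivial (Euc n)]

theorem hypersurfaceMeasure_euc : hypersurfaceMeasure (Euc n) = μH[(n : ℝ) - 1] := by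
  have hn : 0 < n := by simpa only [finrank_euclideanSpace_fin] using
    (Module.finrank_pos : 0 < Module.finrank ℝ (Euc n))
  rw [hypersurfaceMeasure, finrank_euclideanSpace_fin, Nat.cast_pred hn]

namespace IsConvexBody

theorem bdryMeasure_eq (hK : IsConvexBody K) (h0 : 0 ∈ interior K) :
    bdryMeasure n K = (hypersurfaceMeasure (Euc n)).restrict {x | gauge K x = 1} := by
  rw [bdryMeasure, hK.frontier_eq h0, hypersurfaceMeasure_euc]

theorem coneMeasure_gauge_eq_withDensity (hK : IsConvexBody K) (h0 : 0 ∈ interior K) :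
    coneMeasure (conicVolume (Euc n)) (gauge K) =
      (bdryMeasure n K).withDensity (supportHeight (gauge K)) := by
  rw [hK.bdryMeasure_eq h0, (hK.isAsymmetricNorm_gauge h0).coneMeasure_eq_withDensity]

theorem bdryMeasure_eq_withDensity (hK : IsConvexBody K) (h0 : 0 ∈ interior K) :
    bdryMeasure n K = (coneMeasure (conicVolume (Euc n)) (gauge K)).withDensity
      (supportHeight (gauge K))⁻¹ := by
  rw [hK.coneMeasure_gauge_eq_withDensity h0]
  exact (withDensity_inv_same (measurable_supportHeight _)
    (.of_forall fun x => (supportHeight_pos _ x).ne')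
    (.of_forall fun x => (supportHeight_lt_top _ x).ne)).symm

theorem ae_bdryMeasure_ofReal_suppFn_gaussMap (hK : IsConvexBody K) (h0 : 0 ∈ interior K) :
    ∀ᵐ x ∂bdryMeasure n K,
      ENNReal.ofReal (suppFn K (gaussMap K x)) = supportHeight (gauge K) x := by
  have hgauge := hK.isAsymmetricNorm_gauge h0
  rw [hK.bdryMeasure_eq h0]
  filter_upwards [ae_restrict_mem hgauge.isCompact_level.measurableSet,
    hgauge.ae_hypersurfaceMeasure_differentiableAt] with x hx hdiff
  exact hK.ofReal_suppFn_gaussMap h0 hx hdiff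

theorem ae_sphere_differentiableAt_suppFn (hK : IsConvexBody K) (h0 : 0 ∈ interior K) :
    ∀ᵐ u ∂(hypersurfaceMeasure (Euc n)).restrict (sphere 0 1),
      DifferentiableAt ℝ (suppFn K) u := by
  rw [← coneMeasure_conicVolume_norm]
  exact (isAsymmetricNorm_norm _).ae_coneMeasure_differentiableAt (hK.isAsymmetricNorm_suppFn h0)

theorem curv0_eq_map_gradient (hK : IsConvexBody K) (h0 : 0 ∈ interior K) :
    curv0 n K =
      ((hypersurfaceMeasure (Euc n)).restrict (sphere 0 1)).map (gradient (suppFn K)) := by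
  rw [curv0, ← hypersurfaceMeasure_euc]
  refine Measure.map_congr ?_
  filter_upwards [hK.ae_sphere_differentiableAt_suppFn h0,
    ae_restrict_mem isClosed_sphere.measurableSet] with u hdiff hu
  exact hK.gaussMapInv_eq_gradient h0 (ne_of_mem_sphere hu one_ne_zero) hdiff

theorem dualConeMeasure_eq_map_gradient (hK : IsConvexBody K) (h0 : 0 ∈ interior K) :
    dualConeMeasure K = (((hypersurfaceMeasure (Euc n)).restrict (sphere 0 1)).withDensity
      fun u => ENNReal.ofReal (suppFn K u)⁻¹ ^ n).map (gradient (suppFn K)) := by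
  have hsupp := hK.isAsymmetricNorm_suppFn h0
  rw [dualConeMeasure, hsupp.coneMeasure_eq_map_radialProj, coneMeasure_conicVolume_norm,
    finrank_euclideanSpace_fin,
    Measure.map_map (measurable_gradient _) (measurable_radialProj hsupp.continuous.measurable)]
  exact congrArg (Measure.map · _) (funext hsupp.gradient_radialProj)

theorem curv0_restrict_eq_withDensity (hK : IsConvexBody K) (h0 : 0 ∈ interior K) :
    (curv0 n K).restrict {x | DifferentiableAt ℝ (gauge K) x} =
      ((dualConeMeasure K).restrict {x | DifferentiableAt ℝ (gauge K) x}).withDensity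
        fun x => supportHeight (gauge K) x ^ n := by
  have hsupp := hK.isAsymmetricNorm_suppFn h0
  have hgrad : Measurable (gradient (suppFn K)) := measurable_gradient _
  have hheight : Measurable fun x => supportHeight (gauge K) x ^ n :=
    (measurable_supportHeight _).pow_const n
  have hheightgrad : Measurable fun u => supportHeight (gauge K) (gradient (suppFn K) u) ^ n :=
    hheight.comp hgrad
  have hinv : Measurable fun u => ENNReal.ofReal (suppFn K u)⁻¹ ^ n :=
    hsupp.continuous.measurable.inv.ennreal_ofReal.pow_const n
  have hD : MeasurableSet {x | DifferentiableAt ℝ (gauge K) x} :=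
    measurableSet_of_differentiableAt ℝ _
  ext A hA
  have hAD := hA.inter hD
  rw [withDensity_apply _ hA, Measure.restrict_restrict hA, Measure.restrict_apply hA,
    hK.curv0_eq_map_gradient h0, Measure.map_apply hgrad hAD,
    hK.dualConeMeasure_eq_map_gradient h0, setLIntegral_map hAD hheight hgrad,
    setLIntegral_withDensity_eq_setLIntegral_mul _ hinv hheightgrad (hgrad hAD),
    ← setLIntegral_one]
  refine setLIntegral_congr_fun_ae (hgrad hAD) ?_
  filter_upwards [hK.ae_sphere_differentiableAt_suppFn h0,
    ae_restrict_mem isClosed_sphere.measurableSet] with u hdiff hu hmem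
  have hpos := hsupp.pos (ne_of_mem_sphere hu one_ne_zero)
  rw [Pi.mul_apply, hK.supportHeight_gradient_suppFn h0 (mem_sphere_zero_iff_norm.1 hu) hdiff
    hmem.2, ← mul_pow, ← ENNReal.ofReal_mul (inv_pos.2 hpos).le, inv_mul_cancel₀ hpos.ne',
    ENNReal.ofReal_one, one_pow]

theorem isFiniteMeasure_coneMeasure_gauge (hK : IsConvexBody K) (h0 : 0 ∈ interior K) :
    IsFiniteMeasure (coneMeasure (conicVolume (Euc n)) (gauge K)) :=
  (hK.isAsymmetricNorm_gauge h0).isFiniteMeasure_coneMeasure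

theorem isFiniteMeasure_dualConeMeasure (hK : IsConvexBody K) (h0 : 0 ∈ interior K) :
    IsFiniteMeasure (dualConeMeasure K) := by
  have := (hK.isAsymmetricNorm_suppFn h0).isFiniteMeasure_coneMeasure (μ := conicVolume (Euc n))
  exact inferInstanceAs (IsFiniteMeasure (Measure.map _ _))

theorem isFiniteMeasure_curv0 (hK : IsConvexBody K) (h0 : 0 ∈ interior K) :
    IsFiniteMeasure (curv0 n K) := by
  have : IsFiniteMeasure ((hypersurfaceMeasure (Euc n)).restrict (sphere 0 1)) := by
    rw [← coneMeasure_conicVolume_norm]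
    exact (isAsymmetricNorm_norm _).isFiniteMeasure_coneMeasure
  rw [hK.curv0_eq_map_gradient h0]
  infer_instance

theorem rnDeriv_curv0_coneMeasure (hK : IsConvexBody K) (h0 : 0 ∈ interior K) :
    (curv0 n K).rnDeriv (coneMeasure (conicVolume (Euc n)) (gauge K))
      =ᵐ[coneMeasure (conicVolume (Euc n)) (gauge K)] fun x => supportHeight (gauge K) x ^ n *
        (dualConeMeasure K).rnDeriv (coneMeasure (conicVolume (Euc n)) (gauge K)) x := by
  have hgauge := hK.isAsymmetricNorm_gauge h0
  have := hK.isFiniteMeasure_coneMeasure_gauge h0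
  have := hK.isFiniteMeasure_dualConeMeasure h0
  have := hK.isFiniteMeasure_curv0 h0
  set V := coneMeasure (conicVolume (Euc n)) (gauge K)
  have := Measure.haveLebesgueDecomposition_of_sigmaFinite (curv0 n K) V
  have := Measure.haveLebesgueDecomposition_of_sigmaFinite (dualConeMeasure K) V
  have hD : MeasurableSet {x | DifferentiableAt ℝ (gauge K) x} :=
    measurableSet_of_differentiableAt ℝ _
  have hcurv := (curv0 n K).rnDeriv_restrict V hD
  rw [hK.curv0_restrict_eq_withDensity h0] at hcurv
  have hdensity := Measure.rnDeriv_withDensity_left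
    (μ := (dualConeMeasure K).restrict {x | DifferentiableAt ℝ (gauge K) x}) (ν := V)
    (((measurable_supportHeight (gauge K)).pow_const n).aemeasurable)
    (.of_forall fun x => ENNReal.pow_ne_top (supportHeight_lt_top (gauge K) x).ne)
  filter_upwards [hcurv, hdensity, (dualConeMeasure K).rnDeriv_restrict V hD,
    hgauge.ae_coneMeasure_differentiableAt hgauge] with x hxcurv hxdensity hxdual hdiff
  have hxD : x ∈ {x | DifferentiableAt ℝ (gauge K) x} := hdiff
  rwa [hxdensity, hxdual, indicator_of_mem hxD, indicator_of_mem hxD, eq_comm] at hxcurv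

theorem gaussCurv_ae_eq (hK : IsConvexBody K) (h0 : 0 ∈ interior K) :
    gaussCurv n K =ᵐ[coneMeasure (conicVolume (Euc n)) (gauge K)] fun x =>
      supportHeight (gauge K) x ^ (n + 1) *
        (dualConeMeasure K).rnDeriv (coneMeasure (conicVolume (Euc n)) (gauge K)) x := by
  have := hK.isFiniteMeasure_coneMeasure_gauge h0
  have := hK.isFiniteMeasure_curv0 h0
  rw [gaussCurv, hK.bdryMeasure_eq_withDensity h0]
  filter_upwards [Measure.rnDeriv_withDensity_right (curv0 n K)
      (coneMeasure (conicVolume (Euc n)) (gauge K)) (measurable_supportHeight _).inv.aemeasurable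
      (.of_forall fun x => ENNReal.inv_ne_zero.2 (supportHeight_lt_top (gauge K) x).ne)
      (.of_forall fun x => ENNReal.inv_ne_top.2 (supportHeight_pos (gauge K) x).ne'),
    hK.rnDeriv_curv0_coneMeasure h0] with x hbdry hcone
  rw [hbdry, hcone, Pi.inv_apply, inv_inv, pow_succ', mul_assoc]

end IsConvexBody

end Curvature

section AffineFunctional

variable {α β : Type*} [MeasurableSpace α] [MeasurableSpace β]

/-- The competitors in the variational definition of the `L_p` affine surface area, after the
weight has been absorbed into the measure `V`. -/
structure IsCompetitor (p : ℝ) (V : Measure α) (f : α → ℝ≥0∞) : Prop where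
  measurable : Measurable f
  pos_and_lt_top : ∀ x, 0 < f x ∧ f x < ⊤
  lintegral_rpow_lt_top : ∫⁻ x, f x ^ p ∂V < ⊤

/-- The quantity minimised in the definition of the `L_p` affine surface area, as a function of a
cone measure `V` and a dual cone measure `W`; the real number `q` is the dimension. -/
def lpAffineEnergy (q p : ℝ) (V W : Measure α) (f : α → ℝ≥0∞) : ℝ≥0∞ :=
  (∫⁻ x, f x ^ (-q) * W.rnDeriv V x ∂V) ^ (p / (q + p)) * (∫⁻ x, f x ^ p ∂V) ^ (q / (q + p))

/-- The `L_p` affine surface area as a functional of the pair of a cone measure `V` and a dual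
cone measure `W`, in dimension `q`. -/
def lpAffineFunctional (q p : ℝ) (V W : Measure α) : ℝ≥0∞ :=
  ⨅ (f : α → ℝ≥0∞) (_ : IsCompetitor p V f), lpAffineEnergy q p V W f

variable {q p : ℝ} {V W : Measure α}

theorem isCompetitor_map_iff (e : α ≃ᵐ β) {f : β → ℝ≥0∞} :
    IsCompetitor p (V.map e) f ↔ IsCompetitor p V (f ∘ e) := by
  refine ⟨fun hf => ⟨hf.measurable.comp e.measurable, fun x => hf.pos_and_lt_top (e x), ?_⟩,
    fun hf => ⟨e.measurable_comp_iff.1 hf.measurable, fun y => ?_, ?_⟩⟩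
  · simpa only [lintegral_map_equiv, Function.comp_apply] using hf.lintegral_rpow_lt_top
  · simpa only [Function.comp_apply, e.apply_symm_apply] using hf.pos_and_lt_top (e.symm y)
  · simpa only [lintegral_map_equiv, Function.comp_apply] using hf.lintegral_rpow_lt_top

theorem lpAffineEnergy_map [SigmaFinite V] [SigmaFinite W] (e : α ≃ᵐ β) (f : β → ℝ≥0∞) :
    lpAffineEnergy q p (V.map e) (W.map e) f = lpAffineEnergy q p V W (f ∘ e) := by
  simp only [lpAffineEnergy, lintegral_map_equiv, Function.comp_apply]
  congr 2
  refine lintegral_congr_ae ?_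
  filter_upwards [e.measurableEmbedding.rnDeriv_map W V] with x hx
  rw [hx]

theorem lpAffineFunctional_map [SigmaFinite V] [SigmaFinite W] (e : α ≃ᵐ β) :
    lpAffineFunctional q p (V.map e) (W.map e) = lpAffineFunctional q p V W :=
  (e.symm.toEquiv.arrowCongr (.refl ℝ≥0∞)).iInf_congr fun f =>
    iInf_congr_Prop (isCompetitor_map_iff e).symm fun _ => (lpAffineEnergy_map e f).symm

variable {c : ℝ≥0∞}

theorem isCompetitor_smul_iff (hc : c ≠ 0) (hc' : c ≠ ⊤) {f : α → ℝ≥0∞} :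
    IsCompetitor p (c • V) f ↔ IsCompetitor p V f := by
  have hfinite : ∫⁻ x, f x ^ p ∂(c • V) < ⊤ ↔ ∫⁻ x, f x ^ p ∂V < ⊤ := by
    rw [lintegral_smul_measure, smul_eq_mul]
    exact ⟨fun h => ENNReal.lt_top_of_mul_ne_top_right h.ne hc, ENNReal.mul_lt_top hc'.lt_top⟩
  exact ⟨fun hf => ⟨hf.measurable, hf.pos_and_lt_top, hfinite.1 hf.lintegral_rpow_lt_top⟩,
    fun hf => ⟨hf.measurable, hf.pos_and_lt_top, hfinite.2 hf.lintegral_rpow_lt_top⟩⟩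

theorem rnDeriv_inv_smul_smul [IsFiniteMeasure V] [IsFiniteMeasure W] (hc : c ≠ 0) (hc' : c ≠ ⊤) :
    (c⁻¹ • W).rnDeriv (c • V) =ᵐ[V] fun x => c⁻¹ * (c⁻¹ * W.rnDeriv V x) := by
  have := V.smul_finite hc'
  have := Measure.haveLebesgueDecomposition_of_sigmaFinite W V
  have := Measure.haveLebesgueDecomposition_of_sigmaFinite W (c • V)
  have hleft := Measure.rnDeriv_smul_left_of_ne_top W (c • V) (ENNReal.inv_ne_top.2 hc)
  filter_upwards [(Measure.ae_ennreal_smul_measure_iff hc).1 hleft,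
    Measure.rnDeriv_smul_right_of_ne_top W V hc hc'] with x hxleft hxright
  rw [hxleft, Pi.smul_apply, hxright, Pi.smul_apply, smul_eq_mul, smul_eq_mul]

theorem lpAffineEnergy_smul_inv_smul [IsFiniteMeasure V] [IsFiniteMeasure W] (hc : c ≠ 0)
    (hc' : c ≠ ⊤) (hq : 0 ≤ q) (hp : 0 ≤ p) (f : α → ℝ≥0∞) :
    lpAffineEnergy q p (c • V) (c⁻¹ • W) f =
      c ^ ((q - p) / (q + p)) * lpAffineEnergy q p V W f := by
  have hfirst : ∫⁻ x, f x ^ (-q) * (c⁻¹ • W).rnDeriv (c • V) x ∂(c • V) =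
      c⁻¹ * ∫⁻ x, f x ^ (-q) * W.rnDeriv V x ∂V := by
    rw [lintegral_smul_measure, smul_eq_mul, ← lintegral_const_mul' _ _ hc',
      ← lintegral_const_mul' _ _ (ENNReal.inv_ne_top.2 hc)]
    refine lintegral_congr_ae ?_
    filter_upwards [rnDeriv_inv_smul_smul (V := V) (W := W) hc hc'] with x hx
    rw [hx, mul_left_comm, ENNReal.mul_inv_cancel_left hc hc', mul_left_comm]
  have hexponent : (q - p) / (q + p) = -(p / (q + p)) + q / (q + p) := by ring
  rw [lpAffineEnergy, hfirst, lintegral_smul_measure, smul_eq_mul,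
    ENNReal.mul_rpow_of_nonneg _ _ (by positivity), ENNReal.mul_rpow_of_nonneg _ _ (by positivity),
    ENNReal.inv_rpow, ← ENNReal.rpow_neg, mul_mul_mul_comm, ← ENNReal.rpow_add _ _ hc hc',
    ← hexponent, lpAffineEnergy]

theorem lpAffineFunctional_smul_inv_smul [IsFiniteMeasure V] [IsFiniteMeasure W] (hc : c ≠ 0)
    (hc' : c ≠ ⊤) (hq : 0 ≤ q) (hp : 0 ≤ p) :
    lpAffineFunctional q p (c • V) (c⁻¹ • W) =
      c ^ ((q - p) / (q + p)) * lpAffineFunctional q p V W := by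
  have hpow : c ^ ((q - p) / (q + p)) ≠ 0 := (ENNReal.rpow_pos hc.bot_lt hc').ne'
  have hpow' : c ^ ((q - p) / (q + p)) ≠ ⊤ := ENNReal.rpow_ne_top_of_ne_zero hc hc'
  simp only [lpAffineFunctional, ENNReal.mul_iInf_of_ne hpow hpow',
    lpAffineEnergy_smul_inv_smul hc hc' hq hp, isCompetitor_smul_iff hc hc']

end AffineFunctional

section NormalForm

variable {n : ℕ} {p : ℝ} {K : Set (Euc n)} [Nontrivial (Euc n)]

namespace IsConvexBody

theorem lintegral_bdryMeasure_mul_supportHeight (hK : IsConvexBody K) (h0 : 0 ∈ interior K)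
    (F : Euc n → ℝ≥0∞) :
    ∫⁻ x, F x * supportHeight (gauge K) x ∂bdryMeasure n K =
      ∫⁻ x, F x ∂coneMeasure (conicVolume (Euc n)) (gauge K) := by
  rw [hK.coneMeasure_gauge_eq_withDensity h0,
    lintegral_withDensity_eq_lintegral_mul_non_measurable _ (measurable_supportHeight _)
      (.of_forall (supportHeight_lt_top _))]
  exact lintegral_congr fun x => mul_comm _ _

theorem lintegral_rpow_mul_suppFn_gaussMap_rpow (hK : IsConvexBody K) (h0 : 0 ∈ interior K)
    (hp : 0 ≤ p) (f : Euc n → ℝ≥0∞) :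
    ∫⁻ x, (f x * supportHeight (gauge K) x) ^ p *
        ENNReal.ofReal (suppFn K (gaussMap K x)) ^ (1 - p) ∂bdryMeasure n K =
      ∫⁻ x, f x ^ p ∂coneMeasure (conicVolume (Euc n)) (gauge K) := by
  rw [← hK.lintegral_bdryMeasure_mul_supportHeight h0]
  refine lintegral_congr_ae ?_
  filter_upwards [hK.ae_bdryMeasure_ofReal_suppFn_gaussMap h0] with x hx
  rw [hx, ENNReal.mul_rpow_of_nonneg _ _ hp, mul_assoc,
    ← ENNReal.rpow_add _ _ (supportHeight_pos _ x).ne' (supportHeight_lt_top _ x).ne,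
    add_sub_cancel, ENNReal.rpow_one]

theorem lintegral_rpow_neg_mul_gaussCurv (hK : IsConvexBody K) (h0 : 0 ∈ interior K)
    {f : Euc n → ℝ≥0∞} (hf : ∀ x, f x ≠ 0) :
    ∫⁻ x, (f x * supportHeight (gauge K) x) ^ (-(n : ℝ)) * gaussCurv n K x ∂bdryMeasure n K =
      ∫⁻ x, f x ^ (-(n : ℝ)) *
        (dualConeMeasure K).rnDeriv (coneMeasure (conicVolume (Euc n)) (gauge K)) x
          ∂coneMeasure (conicVolume (Euc n)) (gauge K) := by
  have habs : bdryMeasure n K ≪ coneMeasure (conicVolume (Euc n)) (gauge K) := by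
    rw [hK.bdryMeasure_eq_withDensity h0]
    exact withDensity_absolutelyContinuous _ _
  rw [← hK.lintegral_bdryMeasure_mul_supportHeight h0]
  refine lintegral_congr_ae ?_
  filter_upwards [habs.ae_le (hK.gaussCurv_ae_eq h0)] with x hx
  have hs := (supportHeight_pos (gauge K) x).ne'
  have hpow : supportHeight (gauge K) x ^ (-(n : ℝ)) * supportHeight (gauge K) x ^ (n + 1) =
      supportHeight (gauge K) x := by
    rw [← ENNReal.rpow_natCast _ (n + 1), ← ENNReal.rpow_add _ _ hs (supportHeight_lt_top _ x).ne,
      Nat.cast_succ, neg_add_cancel_left, ENNReal.rpow_one]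
  rw [hx, ENNReal.mul_rpow_of_ne_zero (hf x) hs, mul_assoc,
    ← mul_assoc (_ ^ (-(n : ℝ))) (_ ^ (n + 1)), hpow, mul_assoc, mul_comm (supportHeight _ _)]

theorem lpASAm_eq_lpAffineFunctional (hK : IsConvexBody K) (h0 : 0 ∈ interior K) (hp : 0 ≤ p) :
    lpASAm n p K =
      lpAffineFunctional n p (coneMeasure (conicVolume (Euc n)) (gauge K)) (dualConeMeasure K) := by
  have hs0 : ∀ x, supportHeight (gauge K) x ≠ 0 := fun x => (supportHeight_pos _ x).ne'
  have hs_top : ∀ x, supportHeight (gauge K) x ≠ ⊤ := fun x => (supportHeight_lt_top _ x).ne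
  apply le_antisymm
  · refine le_iInf₂ fun f hf => sInf_le ⟨fun x => f x * supportHeight (gauge K) x,
      hf.measurable.mul (measurable_supportHeight _), fun x => ?_, ?_, ?_⟩
    · exact ⟨ENNReal.mul_pos (hf.pos_and_lt_top x).1.ne' (hs0 x),
        ENNReal.mul_lt_top (hf.pos_and_lt_top x).2 (hs_top x).lt_top⟩
    · rw [hK.lintegral_rpow_mul_suppFn_gaussMap_rpow h0 hp]
      exact hf.lintegral_rpow_lt_top
    · rw [hK.lintegral_rpow_mul_suppFn_gaussMap_rpow h0 hp,
        hK.lintegral_rpow_neg_mul_gaussCurv h0 fun x => (hf.pos_and_lt_top x).1.ne', lpAffineEnergy]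
  · refine le_sInf ?_
    rintro _ ⟨g, hg, hg_pos, hg_int, rfl⟩
    obtain ⟨f, hf_def⟩ : ∃ f, f = fun x => g x / supportHeight (gauge K) x := ⟨_, rfl⟩
    have hgf : ∀ x, g x = f x * supportHeight (gauge K) x := fun x => by
      rw [hf_def, ENNReal.div_mul_cancel (hs0 x) (hs_top x)]
    have hf_pos : ∀ x, 0 < f x ∧ f x < ⊤ := fun x => by
      rw [hf_def]
      exact ⟨ENNReal.div_pos (hg_pos x).1.ne' (hs_top x),
        ENNReal.div_lt_top (hg_pos x).2.ne (hs0 x)⟩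
    simp only [hgf, hK.lintegral_rpow_mul_suppFn_gaussMap_rpow h0 hp,
      hK.lintegral_rpow_neg_mul_gaussCurv h0 fun x => (hf_pos x).1.ne'] at hg_int ⊢
    exact iInf₂_le f ⟨hf_def ▸ hg.div (measurable_supportHeight _), hf_pos, hg_int⟩

end IsConvexBody

end NormalForm

section Adjoint

variable {E : Type*} [NormedAddCommGroup E] [InnerProductSpace ℝ E] [FiniteDimensional ℝ E]

/-- The adjoint of a linear automorphism, as an automorphism: linear changes of variables act
through it on support functions. -/
def adjointEquiv (φ : E ≃ₗ[ℝ] E) : E ≃L[ℝ] E :=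
  (LinearEquiv.ofLinearMap (LinearMap.adjoint (φ : E →ₗ[ℝ] E))
    (LinearMap.adjoint (φ.symm : E →ₗ[ℝ] E))
    (by rw [← LinearMap.adjoint_comp, φ.symm_comp, LinearMap.adjoint_id])
    (by rw [← LinearMap.adjoint_comp, φ.comp_symm, LinearMap.adjoint_id])).toContinuousLinearEquiv

theorem inner_adjointEquiv_right (φ : E ≃ₗ[ℝ] E) (x y : E) : ⟪x, adjointEquiv φ y⟫ = ⟪φ x, y⟫ :=
  LinearMap.adjoint_inner_right _ x y

theorem det_adjointEquiv (φ : E ≃ₗ[ℝ] E) :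
    LinearMap.det (adjointEquiv φ : E →ₗ[ℝ] E) = LinearMap.det (φ : E →ₗ[ℝ] E) := by
  have hadjoint : (adjointEquiv φ : E →ₗ[ℝ] E) = LinearMap.adjoint (φ : E →ₗ[ℝ] E) := rfl
  rw [hadjoint, ← LinearMap.det_toMatrix (stdOrthonormalBasis ℝ E).toBasis,
    ← LinearMap.det_toMatrix (stdOrthonormalBasis ℝ E).toBasis (φ : E →ₗ[ℝ] E),
    LinearMap.toMatrix_adjoint, Matrix.det_conjTranspose, star_trivial]

theorem gradient_comp_adjointEquiv (φ : E ≃ₗ[ℝ] E) (f : E → ℝ) :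
    gradient (f ∘ adjointEquiv φ) = φ ∘ gradient f ∘ adjointEquiv φ := by
  ext1 u
  refine ext_inner_right ℝ fun v => ?_
  rw [gradient, InnerProductSpace.toDual_symm_apply, ContinuousLinearEquiv.comp_right_fderiv,
    Function.comp_apply, Function.comp_apply, ← inner_adjointEquiv_right, gradient,
    InnerProductSpace.toDual_symm_apply]
  rfl

end Adjoint

section LinearImage

open scoped Pointwise in
theorem gauge_image_comp {E F : Type*} [AddCommGroup E] [Module ℝ E] [AddCommGroup F] [Module ℝ F]
    (φ : E ≃ₗ[ℝ] F) (K : Set E) : gauge (φ '' K) ∘ φ = gauge K := by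
  ext x
  have hmem (r : ℝ) : φ x ∈ r • (φ '' K) ↔ x ∈ r • K := by
    rw [← image_smul_set, φ.injective.mem_set_image]
  simp only [Function.comp_apply, gauge_def, hmem]

variable {n : ℕ} {K : Set (Euc n)} (φ : Euc n ≃ₗ[ℝ] Euc n)

theorem suppFn_comp_adjointEquiv : suppFn K ∘ adjointEquiv φ = suppFn (φ '' K) := by
  ext u
  simp only [Function.comp_apply, suppFn, image_image, inner_adjointEquiv_right]

theorem zero_mem_interior_image (h0 : 0 ∈ interior K) : 0 ∈ interior (φ '' K) :=
  φ.toContinuousLinearEquiv.toHomeomorph.image_interior K ▸ ⟨0, h0, map_zero φ⟩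

namespace IsConvexBody

theorem image (hK : IsConvexBody K) : IsConvexBody (φ '' K) :=
  ⟨hK.1.image φ.toContinuousLinearEquiv.continuous, hK.2.1.linear_image (φ : Euc n →ₗ[ℝ] Euc n),
    φ.toContinuousLinearEquiv.toHomeomorph.image_interior K ▸ hK.2.2.image φ⟩

variable [Nontrivial (Euc n)]

theorem coneMeasure_gauge_image (hK : IsConvexBody K) (h0 : 0 ∈ interior K) :
    coneMeasure (conicVolume (Euc n)) (gauge (φ '' K)) =
      ENNReal.ofReal |LinearMap.det (φ : Euc n →ₗ[ℝ] Euc n)| •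
        (coneMeasure (conicVolume (Euc n)) (gauge K)).map φ := by
  have hgauge := (hK.image φ).isAsymmetricNorm_gauge (zero_mem_interior_image φ h0)
  rw [← gauge_image_comp φ K]
  exact coneMeasure_eq_smul_map φ.toContinuousLinearEquiv hgauge.continuous.measurable

theorem dualConeMeasure_image (hK : IsConvexBody K) (h0 : 0 ∈ interior K) :
    dualConeMeasure (φ '' K) =
      (ENNReal.ofReal |LinearMap.det (φ : Euc n →ₗ[ℝ] Euc n)|)⁻¹ • (dualConeMeasure K).map φ := by
  have hφ : Measurable φ := φ.toContinuousLinearEquiv.continuous.measurable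
  have hψ : Measurable (adjointEquiv φ) := (adjointEquiv φ).continuous.measurable
  have hgrad : Measurable (gradient (suppFn K)) := measurable_gradient _
  have hdet : ENNReal.ofReal |LinearMap.det (φ : Euc n →ₗ[ℝ] Euc n)| ≠ 0 :=
    (ENNReal.ofReal_pos.2 (abs_pos.2 φ.isUnit_det'.ne_zero)).ne'
  rw [dualConeMeasure, dualConeMeasure, ← suppFn_comp_adjointEquiv, gradient_comp_adjointEquiv,
    ← Measure.map_map hφ (hgrad.comp hψ), ← Measure.map_map hgrad hψ,
    coneMeasure_eq_smul_map (adjointEquiv φ) (hK.isAsymmetricNorm_suppFn h0).continuous.measurable,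
    det_adjointEquiv, Measure.map_smul, Measure.map_smul, smul_smul,
    ENNReal.inv_mul_cancel hdet ENNReal.ofReal_ne_top, one_smul]

end IsConvexBody

end LinearImage

theorem statement14_general (n : ℕ) (hn : 0 < n) (p : ℝ) (hp : 0 ≤ p) (K : Set (Euc n))
    (hK : IsConvexBody K) (h0 : (0 : Euc n) ∈ interior K) (φ : Euc n ≃ₗ[ℝ] Euc n) :
    lpASAm n p (φ '' K) =
      ENNReal.ofReal |LinearMap.det (φ : Euc n →ₗ[ℝ] Euc n)| ^ (((n : ℝ) - p) / (n + p)) *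
        lpASAm n p K := by
  have : Nonempty (Fin n) := ⟨⟨0, hn⟩⟩
  have := hK.isFiniteMeasure_coneMeasure_gauge h0
  have := hK.isFiniteMeasure_dualConeMeasure h0
  have hdet : ENNReal.ofReal |LinearMap.det (φ : Euc n →ₗ[ℝ] Euc n)| ≠ 0 :=
    (ENNReal.ofReal_pos.2 (abs_pos.2 φ.isUnit_det'.ne_zero)).ne'
  have hmap := lpAffineFunctional_map (q := n) (p := p)
    (V := coneMeasure (conicVolume (Euc n)) (gauge K)) (W := dualConeMeasure K)
    φ.toContinuousLinearEquiv.toHomeomorph.toMeasurableEquiv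
  rw [(hK.image φ).lpASAm_eq_lpAffineFunctional (zero_mem_interior_image φ h0) hp,
    hK.lpASAm_eq_lpAffineFunctional h0 hp, hK.coneMeasure_gauge_image φ h0,
    hK.dualConeMeasure_image φ h0,
    lpAffineFunctional_smul_inv_smul hdet ENNReal.ofReal_ne_top n.cast_nonneg hp]
  exact congrArg _ hmap

theorem statement14 (n : ℕ) (hn : 0 < n) (p : ℝ) (hp : 0 < p) (K : Set (Euc n))
    (hK : IsConvexBody K) (h0 : (0 : Euc n) ∈ interior K)
    (φ : Euc n ≃ₗ[ℝ] Euc n)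
    (hdet : LinearMap.det (φ : Euc n →ₗ[ℝ] Euc n) = 1 ∨
            LinearMap.det (φ : Euc n →ₗ[ℝ] Euc n) = -1) :
    lpASAm n p (⇑φ '' K) = lpASAm n p K := by
  rw [statement14_general n hn p hp.le K hK h0 φ, (abs_eq zero_le_one).2 hdet,
    ENNReal.ofReal_one, ENNReal.one_rpow, one_mul]

end
end

section
/- Let p > 0 and K ⊂ ℝⁿ a convex body with 0 ∈ int K. Then ∫_{Sⁿ⁻¹} (F_K(u) / h_K(u)^{p-1})^{n/(n+p)} dH^{n-1}(u) = ∫_{∂K} (H_K(x) / h_K(ν_K(x))^{(p-1)n/p})^{p/(n+p)} dH^{n-1}(x), where F_K is the generalized curvature function and H_K the generalized Gauss curvature. -/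
open MeasureTheory Metric Set Filter
open scoped RealInnerProductSpace ENNReal NNReal Topology

noncomputable section

/-!
Rademacher's theorem, applied to the gauge and to the support function of `K` in radial charts,
shows that almost every boundary point has a unique outer unit normal and almost every direction a
unique support point. Hence the boundary measure `μ` and the spherical measure `σ` lift to measures
`M` and `S` on the compact unit normal bundle, where `F_K = dM/dS` and `H_K = dS/dM` almost
everywhere. For `a + b = 1` both `∫ (dM/dS)^a k dS` and `∫ (dS/dM)^b k dM` are the integral of
`(dM/dλ)^a (dS/dλ)^b k` against `λ = M + S`; the theorem is the case `a = n / (n + p)`,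
`k = h_K ^ (-(p - 1) a)`.
-/

section MeasureTheory

variable {X Y Z : Type*} [MeasurableSpace X] [MeasurableSpace Y] [MeasurableSpace Z]

lemma ennreal_mul_div_rpow {a b : ℝ} (ha : 0 < a) (hb : 0 < b) (hab : a + b = 1) {s t : ℝ≥0∞}
    (ht : t ≠ ∞) : t * (s / t) ^ a = s ^ a * t ^ b := by
  rcases eq_or_ne t 0 with rfl | ht0
  · simp [hb]
  · rw [ENNReal.div_rpow_of_nonneg _ _ ha.le, ← mul_div_assoc, mul_comm, mul_div_assoc,
      eq_sub_of_add_eq' hab, ENNReal.rpow_sub _ _ ht0 ht, ENNReal.rpow_one]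

lemma ennreal_div_rpow_rpow {c : ℝ} (hc : 0 ≤ c) (s t : ℝ≥0∞) (q : ℝ) :
    (s / t ^ q) ^ c = s ^ c * t ^ (-(q * c)) := by
  rw [ENNReal.div_rpow_of_nonneg _ _ hc, ← ENNReal.rpow_mul, ENNReal.rpow_neg, div_eq_mul_inv]

lemma lintegral_rnDeriv_rpow_mul_eq_lintegral_add (μ σ : Measure X) [SigmaFinite μ] [SigmaFinite σ]
    {a b : ℝ} (ha : 0 < a) (hb : 0 < b) (hab : a + b = 1) {k : X → ℝ≥0∞} (hk : Measurable k) :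
    ∫⁻ x, μ.rnDeriv σ x ^ a * k x ∂σ =
      ∫⁻ x, μ.rnDeriv (μ + σ) x ^ a * σ.rnDeriv (μ + σ) x ^ b * k x ∂(μ + σ) := by
  have hσ : σ ≪ μ + σ := Measure.absolutelyContinuous_of_le (Measure.le_add_left le_rfl)
  calc ∫⁻ x, μ.rnDeriv σ x ^ a * k x ∂σ
    _ = ∫⁻ x, (μ.rnDeriv (μ + σ) x / σ.rnDeriv (μ + σ) x) ^ a * k x ∂σ := by
        refine lintegral_congr_ae ?_
        filter_upwards [μ.rnDeriv_eq_div_rnDeriv_add σ] with x hx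
        rw [hx]
    _ = ∫⁻ x, σ.rnDeriv (μ + σ) x *
          ((μ.rnDeriv (μ + σ) x / σ.rnDeriv (μ + σ) x) ^ a * k x) ∂(μ + σ) :=
        (lintegral_rnDeriv_mul hσ (by fun_prop)).symm
    _ = ∫⁻ x, μ.rnDeriv (μ + σ) x ^ a * σ.rnDeriv (μ + σ) x ^ b * k x ∂(μ + σ) := by
        refine lintegral_congr_ae ?_
        filter_upwards [σ.rnDeriv_ne_top (μ + σ)] with x hx
        rw [← mul_assoc, ennreal_mul_div_rpow ha hb hab hx]

theorem lintegral_rnDeriv_rpow_mul_comm (μ σ : Measure X) [SigmaFinite μ] [SigmaFinite σ]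
    {a b : ℝ} (ha : 0 < a) (hb : 0 < b) (hab : a + b = 1) {k : X → ℝ≥0∞} (hk : Measurable k) :
    ∫⁻ x, μ.rnDeriv σ x ^ a * k x ∂σ = ∫⁻ x, σ.rnDeriv μ x ^ b * k x ∂μ := by
  rw [lintegral_rnDeriv_rpow_mul_eq_lintegral_add μ σ ha hb hab hk,
    lintegral_rnDeriv_rpow_mul_eq_lintegral_add σ μ hb ha (by rwa [add_comm]) hk, add_comm σ μ]
  simp only [mul_comm (μ.rnDeriv (μ + σ) _ ^ a)]

lemma map_withDensity_map_of_leftInverse {σ : Measure Y} {g : Y → Z} (hg : AEMeasurable g σ)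
    {π : Z → Y} (hπ : Measurable π) (hπg : Function.LeftInverse π g) {f : Z → ℝ≥0∞}
    (hf : Measurable f) : ((σ.map g).withDensity f).map π = σ.withDensity (f ∘ g) := by
  ext A hA
  rw [Measure.map_apply hπ hA, withDensity_apply _ (hπ hA), withDensity_apply _ hA,
    Measure.restrict_map_of_aemeasurable hg (hπ hA), lintegral_map' hf.aemeasurable hg.restrict,
    ← preimage_comp, hπg.comp_eq_id, preimage_id]
  rfl

lemma mutuallySingular_map_of_section {σ : Measure Y} {ρ : Measure Z} {g : Y → Z}
    (hg : AEMeasurable g σ) {π : Z → Y} (hπ : Measurable π) {N : Set Z} (hρN : ∀ᵐ z ∂ρ, z ∈ N)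
    (hgN : ∀ᵐ y ∂σ, ∀ z ∈ N, π z = y → z = g y) (hρ : ρ ⟂ₘ σ.map g) : ρ.map π ⟂ₘ σ := by
  obtain ⟨D, -, hρD, hσD⟩ := hρ
  have hgD : ∀ᵐ y ∂σ, g y ∈ D := ae_of_ae_map hg (mem_ae_iff.2 hσD)
  obtain ⟨T, hT, hTm, hTD⟩ := (hgD.and hgN).exists_measurable_mem
  refine ⟨T, hTm, ?_, hT⟩
  rw [Measure.map_apply hπ hTm]
  have hTN : ∀ z ∈ π ⁻¹' T, z ∈ N → z ∈ D := fun z hz hzN ↦ by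
    rw [(hTD _ hz).2 z hzN rfl]
    exact (hTD _ hz).1
  have hND : ∀ᵐ z ∂ρ, z ∉ D := measure_eq_zero_iff_ae_notMem.1 hρD
  refine measure_eq_zero_iff_ae_notMem.2 ?_
  filter_upwards [hρN, hND] with z hzN hzD hz using hzD (hTN z hz hzN)

/-- The part of `ρ` off the range of `g` cannot contribute: it projects into the `σ`-null set of
points whose fibre in `N` is not a singleton. -/
theorem rnDeriv_map_ae_eq_of_section {σ : Measure Y} [SigmaFinite σ] {ρ : Measure Z} {g : Y → Z}
    [ρ.HaveLebesgueDecomposition (σ.map g)] (hg : AEMeasurable g σ) {π : Z → Y} (hπ : Measurable π)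
    (hπg : Function.LeftInverse π g) {N : Set Z} (hρN : ∀ᵐ z ∂ρ, z ∈ N)
    (hgN : ∀ᵐ y ∂σ, ∀ z ∈ N, π z = y → z = g y) :
    (ρ.map π).rnDeriv σ =ᵐ[σ] fun y ↦ ρ.rnDeriv (σ.map g) (g y) := by
  have hf : Measurable (ρ.rnDeriv (σ.map g)) := Measure.measurable_rnDeriv _ _
  have hsing : (ρ.singularPart (σ.map g)).map π ⟂ₘ σ :=
    mutuallySingular_map_of_section hg hπ
      ((Measure.absolutelyContinuous_of_le (Measure.singularPart_le _ _)).ae_le hρN) hgN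
      (Measure.mutuallySingular_singularPart _ _)
  refine (Measure.eq_rnDeriv₀ (hf.comp_aemeasurable hg) hsing ?_).symm
  rw [← map_withDensity_map_of_leftInverse hg hπ hπg hf, ← Measure.map_add _ _ hπ,
    Measure.singularPart_add_rnDeriv]

lemma lintegral_rnDeriv_map_rpow_mul_of_section {σ : Measure Y} [SigmaFinite σ]
    {ρ : Measure Z} {g : Y → Z} [ρ.HaveLebesgueDecomposition (σ.map g)] (hg : AEMeasurable g σ)
    {π : Z → Y} (hπ : Measurable π) (hπg : Function.LeftInverse π g) {N : Set Z}
    (hρN : ∀ᵐ z ∂ρ, z ∈ N) (hgN : ∀ᵐ y ∂σ, ∀ z ∈ N, π z = y → z = g y) (a : ℝ)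
    {k : Z → ℝ≥0∞} (hk : Measurable k) :
    ∫⁻ y, (ρ.map π).rnDeriv σ y ^ a * k (g y) ∂σ =
      ∫⁻ z, ρ.rnDeriv (σ.map g) z ^ a * k z ∂(σ.map g) := by
  rw [lintegral_map' (by fun_prop) hg]
  refine lintegral_congr_ae ?_
  filter_upwards [rnDeriv_map_ae_eq_of_section hg hπ hπg hρN hgN] with y hy
  rw [hy]

/-- Lifting `μ` and `σ` to measures `M` and `S` on the correspondence `N` puts them on one space,
where their mutual densities can be exchanged. -/
theorem lintegral_rnDeriv_map_rpow_mul_comm {μ : Measure X} {σ : Measure Y} [IsFiniteMeasure μ]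
    [IsFiniteMeasure σ] {N : Set (X × Y)} (hN : MeasurableSet N) {ν : X → Y} {τ : Y → X}
    (hν : AEMeasurable ν μ) (hτ : AEMeasurable τ σ) (hνN : ∀ᵐ x ∂μ, ∀ y, (x, y) ∈ N ↔ y = ν x)
    (hτN : ∀ᵐ y ∂σ, ∀ x, (x, y) ∈ N ↔ x = τ y) {a b : ℝ} (ha : 0 < a) (hb : 0 < b)
    (hab : a + b = 1) {k : Y → ℝ≥0∞} (hk : Measurable k) :
    ∫⁻ y, (μ.map ν).rnDeriv σ y ^ a * k y ∂σ =
      ∫⁻ x, (σ.map τ).rnDeriv μ x ^ b * k (ν x) ∂μ := by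
  have hν' : AEMeasurable (fun x ↦ (x, ν x)) μ := aemeasurable_id.prodMk hν
  have hτ' : AEMeasurable (fun y ↦ (τ y, y)) σ := hτ.prodMk aemeasurable_id
  set M := μ.map fun x ↦ (x, ν x)
  set S := σ.map fun y ↦ (τ y, y)
  have hMN : ∀ᵐ z ∂M, z ∈ N :=
    (ae_map_iff hν' hN).2 (hνN.mono fun x hx ↦ (hx _).2 rfl)
  have hSN : ∀ᵐ z ∂S, z ∈ N :=
    (ae_map_iff hτ' hN).2 (hτN.mono fun y hy ↦ (hy _).2 rfl)
  calc ∫⁻ y, (μ.map ν).rnDeriv σ y ^ a * k y ∂σ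
    _ = ∫⁻ y, (M.map Prod.snd).rnDeriv σ y ^ a * k y ∂σ := by
        rw [AEMeasurable.map_map_of_aemeasurable measurable_snd.aemeasurable hν']; rfl
    _ = ∫⁻ z, M.rnDeriv S z ^ a * k z.2 ∂S :=
        lintegral_rnDeriv_map_rpow_mul_of_section hτ' measurable_snd (fun _ ↦ rfl) hMN
          (hτN.mono fun y hy z hz hzy ↦ Prod.ext ((hy _).1 (by rwa [← hzy])) hzy) a
          (hk.comp measurable_snd)
    _ = ∫⁻ z, S.rnDeriv M z ^ b * k z.2 ∂M :=
        lintegral_rnDeriv_rpow_mul_comm M S ha hb hab (hk.comp measurable_snd)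
    _ = ∫⁻ x, (S.map Prod.fst).rnDeriv μ x ^ b * k (ν x) ∂μ :=
        (lintegral_rnDeriv_map_rpow_mul_of_section hν' measurable_fst (fun _ ↦ rfl) hSN
          (hνN.mono fun x hx z hz hzx ↦ Prod.ext hzx ((hx _).1 (by rwa [← hzx]))) b
          (hk.comp measurable_snd)).symm
    _ = ∫⁻ x, (σ.map τ).rnDeriv μ x ^ b * k (ν x) ∂μ := by
        rw [AEMeasurable.map_map_of_aemeasurable measurable_fst.aemeasurable hτ']; rfl

end MeasureTheory

section CompactGraph

variable {X Y : Type*} [TopologicalSpace X] [T2Space X] [TopologicalSpace Y] {N : Set (X × Y)}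
  {f : X → Y}

lemma continuousOn_of_isCompact_of_mem_iff (hN : IsCompact N) {s : Set X}
    (hf : ∀ x ∈ s, ∀ y, (x, y) ∈ N ↔ y = f x) : ContinuousOn f s := by
  refine continuousOn_iff_isClosed.2 fun t ht ↦ ⟨Prod.fst '' (N ∩ Prod.snd ⁻¹' t),
    ((hN.inter_right (ht.preimage continuous_snd)).image continuous_fst).isClosed, ?_⟩
  ext x
  refine and_congr_left fun hx ↦ ⟨fun hxt ↦ ⟨(x, f x), ⟨(hf x hx _).2 rfl, hxt⟩, rfl⟩, ?_⟩
  rintro ⟨⟨x, y⟩, ⟨hxy, hyt⟩, rfl⟩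
  exact (hf x hx y).1 hxy ▸ hyt

lemma aemeasurable_of_isCompact_of_ae_mem_iff [MeasurableSpace X] [OpensMeasurableSpace X]
    [MeasurableSpace Y] [BorelSpace Y] {μ : Measure X} (hN : IsCompact N)
    (hf : ∀ᵐ x ∂μ, ∀ y, (x, y) ∈ N ↔ y = f x) : AEMeasurable f μ := by
  obtain ⟨T, hTμ, hT, hTN⟩ := hf.exists_measurable_mem
  have := (continuousOn_of_isCompact_of_mem_iff hN hTN).aemeasurable (μ := μ) hT
  rwa [Measure.restrict_eq_self_of_ae_mem hTμ] at this

end CompactGraph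

section LevelSet

/-- Positive homogeneity of degree one, as shared by norms, gauges and support functions. -/
def IsPosHomogeneous {E : Type*} [AddCommGroup E] [Module ℝ E] (G : E → ℝ) : Prop :=
  ∀ ⦃t : ℝ⦄, 0 < t → ∀ x, G (t • x) = t * G x

lemma IsPosHomogeneous.map_zero {E : Type*} [AddCommGroup E] [Module ℝ E] {G : E → ℝ}
    (hG : IsPosHomogeneous G) : G 0 = 0 := by
  have := hG two_pos 0
  rw [smul_zero] at this
  linarith

lemma IsPosHomogeneous.ne_zero_of_eq_one {E : Type*} [AddCommGroup E] [Module ℝ E] {G : E → ℝ}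
    (hG : IsPosHomogeneous G) {x : E} (hx : G x = 1) : x ≠ 0 := by
  rintro rfl
  exact zero_ne_one (hG.map_zero.symm.trans hx)

variable {E : Type*} [NormedAddCommGroup E] [NormedSpace ℝ E]

/-- The linear functionals below `h` that touch it at `x`. For the gauge of a convex body these are
the (suitably normalized) outer normals at a boundary point, for its support function the points of
the body with outer normal `x`. -/
def supportingFunctionals (h : E → ℝ) (x : E) : Set (StrongDual ℝ E) :=
  {φ | (∀ z, φ z ≤ h z) ∧ φ x = h x}

lemma supportingFunctionals_smul {h : E → ℝ} (hh : IsPosHomogeneous h) {t : ℝ} (ht : 0 < t)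
    (x : E) : supportingFunctionals h (t • x) = supportingFunctionals h x := by
  ext φ
  simp [supportingFunctionals, hh ht, ht.ne']

lemma eq_fderiv_of_mem_supportingFunctionals {h : E → ℝ} {V : Submodule ℝ E} {x : E} {y : V}
    (hd : DifferentiableAt ℝ (fun y : V ↦ h (x + y)) y) {φ : StrongDual ℝ E}
    (hφ : φ ∈ supportingFunctionals h (x + y)) :
    φ.comp V.subtypeL = fderiv ℝ (fun y : V ↦ h (x + y)) y := by
  have hmin : IsLocalMin (fun z : V ↦ h (x + z) - φ (x + z)) y :=
    .of_forall fun z ↦ by linarith [hφ.1 (x + z), hφ.2]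
  have hφ' : HasFDerivAt (fun z : V ↦ φ (x + z)) (φ.comp V.subtypeL) y :=
    φ.hasFDerivAt.comp y (V.subtypeL.hasFDerivAt.const_add x)
  exact (sub_eq_zero.1 (hmin.hasFDerivAt_eq_zero (hd.hasFDerivAt.sub hφ'))).symm

lemma supportingFunctionals_subsingleton {h : E → ℝ} {f : StrongDual ℝ E} {x : E} (hfx : f x = 1)
    {y : f.ker} (hd : DifferentiableAt ℝ (fun y : f.ker ↦ h (x + y)) y) :
    (supportingFunctionals h (x + y)).Subsingleton := by
  intro φ hφ ψ hψ
  have hker : ∀ z : f.ker, φ z = ψ z := fun z ↦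
    DFunLike.congr_fun ((eq_fderiv_of_mem_supportingFunctionals hd hφ).trans
      (eq_fderiv_of_mem_supportingFunctionals hd hψ).symm) z
  have hx : φ x = ψ x := by
    have := hφ.2.trans hψ.2.symm
    rwa [map_add, map_add, hker, add_left_inj] at this
  ext z
  have := hker ⟨z - f z • x, by simp [hfx]⟩
  simpa [hx] using this

lemma lipschitzWith_const_add_coe (x : E) (V : Submodule ℝ E) :
    LipschitzWith 1 fun y : V ↦ x + (y : E) :=
  LipschitzWith.of_dist_le_mul fun y z ↦ by simp [Subtype.dist_eq]

/-- The chart of the level set `{G = 1}` over the hyperplane `x + ker f`, by radial projection. -/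
def radialChart (G : E → ℝ) (x : E) (f : StrongDual ℝ E) (y : f.ker) : E :=
  (G (x + y))⁻¹ • (x + y)

lemma exists_lipschitzOnWith_radialChart {G : E → ℝ} {L : ℝ≥0} (hG : LipschitzWith L G) {x : E}
    (hx : G x ≠ 0) (f : StrongDual ℝ E) :
    ∃ C, ∃ t ∈ 𝓝 (0 : f.ker), LipschitzOnWith C (radialChart G x f) t := by
  have hsmul : ContDiffAt ℝ 1 (fun q : ℝ × E ↦ q.1⁻¹ • q.2) (G x, x) :=
    (contDiffAt_fst.inv hx).smul contDiffAt_snd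
  obtain ⟨C, s, hs, hC⟩ := hsmul.exists_lipschitzOnWith
  have hpair : LipschitzWith _ fun y : f.ker ↦ (G (x + y), x + (y : E)) :=
    (hG.comp (lipschitzWith_const_add_coe x f.ker)).prodMk (lipschitzWith_const_add_coe x f.ker)
  have hs' : s ∈ 𝓝 (G (x + (0 : f.ker)), x + ((0 : f.ker) : E)) := by simpa using hs
  exact ⟨_, _, hpair.continuous.continuousAt.preimage_mem_nhds hs',
    hC.comp hpair.lipschitzOnWith (mapsTo_preimage _ _)⟩

lemma eventually_mem_image_radialChart {G : E → ℝ} (hG : IsPosHomogeneous G) {x : E}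
    {f : StrongDual ℝ E} (hfx : f x = 1) {t : Set f.ker} (ht : t ∈ 𝓝 0) :
    ∀ᶠ z in 𝓝[{z | G z = 1}] x, ∃ y ∈ t, 0 < G (x + y) ∧ radialChart G x f y = z := by
  have hf : Tendsto f (𝓝 x) (𝓝 1) := hfx ▸ f.continuous.tendsto x
  have hcoord : Tendsto (fun z ↦ (f z)⁻¹ • z - x) (𝓝 x) (𝓝 0) := by
    simpa using ((hf.inv₀ one_ne_zero).smul tendsto_id).sub_const x
  obtain ⟨U, hU, hUt⟩ := mem_nhds_induced _ _ _ |>.1 ht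
  have hpos : ∀ᶠ z in 𝓝 x, 0 < f z := hf.eventually (lt_mem_nhds one_pos)
  filter_upwards [self_mem_nhdsWithin, nhdsWithin_le_nhds hpos,
    nhdsWithin_le_nhds (hcoord hU)] with z (hz : G z = 1) hfz hzU
  have hGz : G ((f z)⁻¹ • z) = (f z)⁻¹ := by rw [hG (inv_pos.2 hfz), hz, mul_one]
  refine ⟨⟨(f z)⁻¹ • z - x, by simp [hfx, hfz.ne']⟩, hUt hzU, ?_, ?_⟩
  · simpa [hGz] using hfz
  · simp [radialChart, hGz, hfz.ne']

variable [FiniteDimensional ℝ E]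

lemma finrank_ker_eq_sub_one {f : StrongDual ℝ E} (hf : f ≠ 0) :
    (Module.finrank ℝ f.ker : ℝ) = Module.finrank ℝ E - 1 :=
  eq_sub_of_add_eq <| mod_cast
    Module.Dual.finrank_ker_add_one_of_ne_zero (f := (f : Module.Dual ℝ E))
      (ContinuousLinearMap.coe_injective.ne hf)

variable [MeasurableSpace E] [BorelSpace E]

lemma hausdorffMeasure_image_ker_le {f : StrongDual ℝ E} (hf : f ≠ 0) {g : f.ker → E} {C : ℝ≥0}
    {t : Set f.ker} (hC : LipschitzOnWith C g t) :
    μH[(Module.finrank ℝ E : ℝ) - 1] (g '' t) ≤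
      (C : ℝ≥0∞) ^ (Module.finrank ℝ f.ker : ℝ) * μH[Module.finrank ℝ f.ker] t := by
  rw [← finrank_ker_eq_sub_one hf]
  exact hC.hausdorffMeasure_image_le (Nat.cast_nonneg _)

theorem hausdorffMeasure_lt_top_of_isCompact_of_subset_levelSet {G : E → ℝ} {L : ℝ≥0}
    (hG : LipschitzWith L G) (hGh : IsPosHomogeneous G) {s : Set E} (hs : IsCompact s)
    (hsG : s ⊆ {x | G x = 1}) : μH[(Module.finrank ℝ E : ℝ) - 1] s < ∞ := by
  refine hs.measure_lt_top_of_nhdsWithin fun x hx ↦ ?_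
  have hGx : G x = 1 := hsG hx
  obtain ⟨f, hfx⟩ := SeparatingDual.exists_eq_one (R := ℝ) (hGh.ne_zero_of_eq_one hGx)
  have hf : f ≠ 0 := by rintro rfl; simp at hfx
  obtain ⟨C, t, ht, hC⟩ := exists_lipschitzOnWith_radialChart hG (hGx.trans_ne one_ne_zero) f
  obtain ⟨t', ht', hfin⟩ := (μH[Module.finrank ℝ f.ker] : Measure f.ker).finiteAt_nhds 0
  refine ⟨radialChart G x f '' (t ∩ t'), ?_, ?_⟩
  · filter_upwards [nhdsWithin_mono x hsG (eventually_mem_image_radialChart hGh hfx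
      (inter_mem ht ht'))] with z ⟨y, hy, _, hyz⟩ using ⟨y, hy, hyz⟩
  · refine (hausdorffMeasure_image_ker_le hf (hC.mono inter_subset_left)).trans_lt ?_
    exact ENNReal.mul_lt_top (ENNReal.rpow_lt_top_of_nonneg (Nat.cast_nonneg _) ENNReal.coe_ne_top)
      ((measure_mono inter_subset_right).trans_lt hfin)

/-- By Rademacher's theorem `h` is differentiable almost everywhere in each chart. -/
theorem hausdorffMeasure_levelSet_not_supportingFunctionals_subsingleton {G h : E → ℝ} {L M : ℝ≥0}
    (hG : LipschitzWith L G) (hGh : IsPosHomogeneous G) (hh : LipschitzWith M h)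
    (hhh : IsPosHomogeneous h) :
    μH[(Module.finrank ℝ E : ℝ) - 1]
      {x | G x = 1 ∧ ¬ (supportingFunctionals h x).Subsingleton} = 0 := by
  refine measure_null_of_locally_null _ fun x ⟨hGx, _⟩ ↦ ?_
  obtain ⟨f, hfx⟩ := SeparatingDual.exists_eq_one (R := ℝ) (hGh.ne_zero_of_eq_one hGx)
  have hf : f ≠ 0 := by rintro rfl; simp at hfx
  obtain ⟨C, t, ht, hC⟩ := exists_lipschitzOnWith_radialChart hG (hGx.trans_ne one_ne_zero) f
  set D : Set f.ker := {y | ¬ DifferentiableAt ℝ (fun y : f.ker ↦ h (x + y)) y}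
  have hD : μH[Module.finrank ℝ f.ker] D = 0 :=
    (hh.comp (lipschitzWith_const_add_coe x f.ker)).ae_differentiableAt
  refine ⟨radialChart G x f '' (t ∩ D), ?_, ?_⟩
  · filter_upwards [self_mem_nhdsWithin, nhdsWithin_mono x (fun _ hz ↦ hz.1)
      (eventually_mem_image_radialChart hGh hfx ht)] with z ⟨_, hz⟩ ⟨y, hy, hpos, hyz⟩
    refine ⟨y, ⟨hy, fun hd ↦ hz ?_⟩, hyz⟩
    rw [← hyz, radialChart, supportingFunctionals_smul hhh (inv_pos.2 hpos)]
    exact supportingFunctionals_subsingleton hfx hd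
  · have := hausdorffMeasure_image_ker_le hf (hC.mono (inter_subset_left (t := D)))
    rw [measure_mono_null inter_subset_right hD, mul_zero] at this
    exact le_zero_iff.1 this

lemma ae_restrict_levelSet_supportingFunctionals_subsingleton {G h : E → ℝ} {L M : ℝ≥0}
    (hG : LipschitzWith L G) (hGh : IsPosHomogeneous G) (hh : LipschitzWith M h)
    (hhh : IsPosHomogeneous h) :
    ∀ᵐ x ∂(μH[(Module.finrank ℝ E : ℝ) - 1]).restrict {x | G x = 1},
      (supportingFunctionals h x).Subsingleton := by
  have hmeas : MeasurableSet {x | G x = 1} := hG.continuous.measurable (measurableSet_singleton 1)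
  rw [ae_restrict_iff' hmeas, ae_iff]
  simpa only [Classical.not_imp, mem_ofPred_eq] using
    hausdorffMeasure_levelSet_not_supportingFunctionals_subsingleton hG hGh hh hhh

end LevelSet

section ConvexBody

lemma not_isMaxOn_of_mem_interior {E : Type*} [NormedAddCommGroup E] [NormedSpace ℝ E]
    {f : StrongDual ℝ E} (hf : f ≠ 0) {K : Set E} {x : E} (hx : x ∈ interior K) :
    ¬ IsMaxOn f K x := fun h ↦
  hf ((h.isLocalMax (mem_interior_iff_mem_nhds.1 hx)).hasFDerivAt_eq_zero f.hasFDerivAt)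

variable {n : ℕ} {K : Set (Euc n)} {u x : Euc n}

lemma innerSL_ne_zero (hu : ‖u‖ = 1) : innerSL ℝ u ≠ 0 := by
  rw [← norm_ne_zero_iff, innerSL_apply_norm, hu]
  exact one_ne_zero

lemma isOuterNormalAt_iff_isMaxOn :
    IsOuterNormalAt K u x ↔ x ∈ frontier K ∧ IsMaxOn (innerSL ℝ u) K x := by
  simp [IsOuterNormalAt, isMaxOn_iff, real_inner_comm u]

lemma IsOuterNormalAt.mem (hux : IsOuterNormalAt K u x) (hK : IsClosed K) : x ∈ K :=
  hK.frontier_subset hux.1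

lemma IsOuterNormalAt.inner_pos (hux : IsOuterNormalAt K u x) (hu : ‖u‖ = 1)
    (h0 : 0 ∈ interior K) : 0 < ⟪x, u⟫ := by
  by_contra! hle
  refine not_isMaxOn_of_mem_interior (innerSL_ne_zero hu) h0 fun y hy ↦ ?_
  simpa [real_inner_comm u] using (hux.2 y hy).trans hle

lemma exists_isOuterNormalAt_of_mem_frontier (hK : Convex ℝ K) (hne : (interior K).Nonempty)
    (hx : x ∈ frontier K) : ∃ u, ‖u‖ = 1 ∧ IsOuterNormalAt K u x := by
  obtain ⟨z, hz⟩ := hne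
  obtain ⟨f, hf⟩ := geometric_hahn_banach_open_point hK.interior isOpen_interior hx.2
  obtain ⟨v, rfl⟩ := (InnerProductSpace.toDual ℝ (Euc n)).surjective f
  simp only [InnerProductSpace.toDual_apply_apply] at hf
  have hv : v ≠ 0 := by
    rintro rfl
    simpa using hf z hz
  have hle : ∀ y ∈ K, ⟪v, y⟫ ≤ ⟪v, x⟫ := fun y hy ↦
    closure_minimal (t := {y | ⟪v, y⟫ ≤ ⟪v, x⟫}) (fun y hy ↦ (hf y hy).le)
      (isClosed_le (by fun_prop) continuous_const)
      ((hK.closure_interior_eq_closure_of_nonempty_interior ⟨z, hz⟩).ge (subset_closure hy))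
  refine ⟨‖v‖⁻¹ • v, norm_smul_inv_norm (𝕜 := ℝ) hv, hx, fun y hy ↦ ?_⟩
  rw [real_inner_smul_right, real_inner_smul_right, real_inner_comm, real_inner_comm v x]
  gcongr
  exact hle y hy

lemma exists_isOuterNormalAt_of_norm_eq_one (hK : IsCompact K) (hne : K.Nonempty)
    (hu : ‖u‖ = 1) : ∃ x, IsOuterNormalAt K u x := by
  obtain ⟨x, hxK, hx⟩ := hK.exists_isMaxOn hne
    (innerSL ℝ u).continuous.continuousOn
  exact ⟨x, isOuterNormalAt_iff_isMaxOn.2 ⟨⟨subset_closure hxK, fun hint ↦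
    not_isMaxOn_of_mem_interior (innerSL_ne_zero hu) hint hx⟩, hx⟩⟩

/-- The unit normal bundle of `K`: the pairs of a boundary point and an outer unit normal there. -/
def normalBundle (K : Set (Euc n)) : Set (Euc n × Euc n) :=
  {q | ‖q.2‖ = 1 ∧ IsOuterNormalAt K q.2 q.1}

lemma isCompact_normalBundle (hK : IsCompact K) : IsCompact (normalBundle K) := by
  have hfr : IsCompact (frontier K) := hK.of_isClosed_subset isClosed_frontier
    hK.isClosed.frontier_subset
  have hcl : IsClosed {q : Euc n × Euc n | ∀ y ∈ K, ⟪y, q.2⟫ ≤ ⟪q.1, q.2⟫} := by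
    simp only [ofPred_forall]
    exact isClosed_biInter fun y _ ↦ isClosed_le (by fun_prop) (by fun_prop)
  convert (hfr.prod (isCompact_sphere 0 1)).inter_right hcl using 1
  ext q
  simp only [normalBundle, IsOuterNormalAt, mem_ofPred_eq, mem_inter_iff, mem_prod,
    mem_sphere_zero_iff_norm]
  tauto

lemma mk_gaussMap_mem_normalBundle (hK : Convex ℝ K) (hne : (interior K).Nonempty)
    (hx : x ∈ frontier K) : (x, gaussMap K x) ∈ normalBundle K := by
  have h := exists_isOuterNormalAt_of_mem_frontier hK hne hx
  rw [gaussMap, dif_pos h]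
  exact h.choose_spec

lemma gaussMapInv_mk_mem_normalBundle (hK : IsCompact K) (hne : K.Nonempty)
    (hu : ‖u‖ = 1) : (gaussMapInv K u, u) ∈ normalBundle K := by
  have h := exists_isOuterNormalAt_of_norm_eq_one hK hne hu
  rw [gaussMapInv, dif_pos h]
  exact ⟨hu, h.choose_spec⟩

lemma inner_le_suppFn (hK : IsCompact K) (hx : x ∈ K) (u : Euc n) : ⟪x, u⟫ ≤ suppFn K u :=
  le_csSup (hK.image (f := fun y ↦ ⟪y, u⟫) (by fun_prop)).bddAbove ⟨x, hx, rfl⟩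

lemma IsOuterNormalAt.inner_eq_suppFn (hux : IsOuterNormalAt K u x) (hK : IsCompact K) :
    ⟪x, u⟫ = suppFn K u :=
  (inner_le_suppFn hK (hux.mem hK.isClosed) u).antisymm <|
    csSup_le ⟨_, x, hux.mem hK.isClosed, rfl⟩ (forall_mem_image.2 hux.2)

lemma exists_lipschitzWith_suppFn (hK : IsCompact K) (hne : K.Nonempty) :
    ∃ L, LipschitzWith L (suppFn K) := by
  obtain ⟨R, hR⟩ := hK.isBounded.exists_norm_le
  refine ⟨R.toNNReal, .of_le_add_mul _ fun u v ↦ csSup_le (hne.image _) (forall_mem_image.2 ?_)⟩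
  intro y hy
  calc ⟪y, u⟫ = ⟪y, v⟫ + ⟪y, u - v⟫ := by rw [← inner_add_right, add_sub_cancel]
    _ ≤ suppFn K v + ‖y‖ * ‖u - v‖ := add_le_add (inner_le_suppFn hK hy v) (real_inner_le_norm _ _)
    _ ≤ suppFn K v + R.toNNReal * dist u v := by
        rw [dist_eq_norm]
        gcongr
        exact (hR y hy).trans (Real.le_coe_toNNReal R)

lemma isPosHomogeneous_suppFn (K : Set (Euc n)) : IsPosHomogeneous (suppFn K) := fun t ht x ↦ by
  simp only [suppFn, real_inner_smul_right]
  rw [← smul_eq_mul, ← Real.sSup_smul_of_nonneg ht.le, ← image_smul, image_image]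
  simp only [smul_eq_mul]

lemma isPosHomogeneous_gauge {E : Type*} [AddCommGroup E] [Module ℝ E] (K : Set E) :
    IsPosHomogeneous (gauge K) :=
  fun _ ht x ↦ gauge_smul_of_nonneg ht.le x

lemma isPosHomogeneous_norm {E : Type*} [SeminormedAddCommGroup E] [NormedSpace ℝ E] :
    IsPosHomogeneous (norm : E → ℝ) :=
  fun _ ht x ↦ norm_smul_of_nonneg ht.le x

lemma IsOuterNormalAt.innerSL_mem_supportingFunctionals_suppFn (hux : IsOuterNormalAt K u x)
    (hK : IsCompact K) : innerSL ℝ x ∈ supportingFunctionals (suppFn K) u :=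
  ⟨inner_le_suppFn hK (hux.mem hK.isClosed), hux.inner_eq_suppFn hK⟩

lemma IsOuterNormalAt.inner_le_gauge_mul (hux : IsOuterNormalAt K u x) (hu : ‖u‖ = 1)
    (h0 : 0 ∈ interior K) (z : Euc n) : ⟪z, u⟫ ≤ gauge K z * ⟪x, u⟫ := by
  have habs : Absorbent ℝ K := absorbent_nhds_zero (mem_interior_iff_mem_nhds.1 h0)
  have hpos := hux.inner_pos hu h0
  rw [← div_le_iff₀ hpos]
  refine le_of_forall_gt fun r hr ↦ ?_
  obtain ⟨b, hb, hbr, y, hy, rfl⟩ := exists_lt_of_gauge_lt habs hr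
  refine lt_of_le_of_lt ?_ hbr
  rw [div_le_iff₀ hpos, real_inner_smul_left]
  exact mul_le_mul_of_nonneg_left (hux.2 y hy) hb.le

lemma IsOuterNormalAt.innerSL_mem_supportingFunctionals_gauge (hux : IsOuterNormalAt K u x)
    (hu : ‖u‖ = 1) (hK : Convex ℝ K) (h0 : 0 ∈ interior K) :
    innerSL ℝ ((⟪x, u⟫)⁻¹ • u) ∈ supportingFunctionals (gauge K) x := by
  have hpos := hux.inner_pos hu h0
  refine ⟨fun z ↦ ?_, ?_⟩
  · rw [innerSL_apply_apply, real_inner_smul_left, real_inner_comm _ u, inv_mul_le_iff₀ hpos,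
      mul_comm]
    exact hux.inner_le_gauge_mul hu h0 z
  · rw [innerSL_apply_apply, real_inner_smul_left, real_inner_comm x u, inv_mul_cancel₀ hpos.ne',
      (gauge_eq_one_iff_mem_frontier hK (mem_interior_iff_mem_nhds.1 h0)).2 hux.1]

lemma mem_normalBundle_iff_eq_gaussMap (hK : Convex ℝ K) (h0 : 0 ∈ interior K)
    (hx : x ∈ frontier K) (hsub : (supportingFunctionals (gauge K) x).Subsingleton) (u : Euc n) :
    (x, u) ∈ normalBundle K ↔ u = gaussMap K x := by
  refine ⟨fun ⟨hu, hux⟩ ↦ ?_, fun h ↦ h ▸ mk_gaussMap_mem_normalBundle hK ⟨0, h0⟩ hx⟩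
  obtain ⟨hv, hvx⟩ := mk_gaussMap_mem_normalBundle hK ⟨0, h0⟩ hx
  have heq : (⟪x, u⟫)⁻¹ • u = (⟪x, gaussMap K x⟫)⁻¹ • gaussMap K x :=
    (innerSL_inj (𝕜 := ℝ)).1 (hsub (hux.innerSL_mem_supportingFunctionals_gauge hu hK h0)
      (hvx.innerSL_mem_supportingFunctionals_gauge hv hK h0))
  have hray : SameRay ℝ u (gaussMap K x) :=
    .inr (.inr ⟨_, _, inv_pos.2 (hux.inner_pos hu h0), inv_pos.2 (hvx.inner_pos hv h0), heq⟩)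
  exact hray.eq_of_norm_eq (hu.trans hv.symm)

lemma mem_normalBundle_iff_eq_gaussMapInv (hK : IsCompact K) (hne : K.Nonempty) (hu : ‖u‖ = 1)
    (hsub : (supportingFunctionals (suppFn K) u).Subsingleton) (x : Euc n) :
    (x, u) ∈ normalBundle K ↔ x = gaussMapInv K u := by
  have hmem := gaussMapInv_mk_mem_normalBundle hK hne hu
  exact ⟨fun hux ↦ (innerSL_inj (𝕜 := ℝ)).1 <|
    hsub (hux.2.innerSL_mem_supportingFunctionals_suppFn hK)
      (hmem.2.innerSL_mem_supportingFunctionals_suppFn hK), fun h ↦ h ▸ hmem⟩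

lemma ae_bdryMeasure_mem_normalBundle_iff (hK : Convex ℝ K) (h0 : 0 ∈ interior K) :
    ∀ᵐ x ∂bdryMeasure n K, ∀ u, (x, u) ∈ normalBundle K ↔ u = gaussMap K x := by
  obtain ⟨L, hL⟩ := hK.lipschitz_gauge (mem_interior_iff_mem_nhds.1 h0)
  have hae := ae_restrict_levelSet_supportingFunctionals_subsingleton hL (isPosHomogeneous_gauge K)
    hL (isPosHomogeneous_gauge K)
  simp only [gauge_eq_one_iff_mem_frontier hK (mem_interior_iff_mem_nhds.1 h0), ofPred_mem_eq,
    finrank_euclideanSpace_fin] at hae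
  filter_upwards [hae, ae_restrict_mem isClosed_frontier.measurableSet] with x hsub hx
    using mem_normalBundle_iff_eq_gaussMap hK h0 hx hsub

lemma ae_sphere_mem_normalBundle_iff (hK : IsCompact K) (hne : K.Nonempty) :
    ∀ᵐ u ∂(μH[(n : ℝ) - 1]).restrict (sphere (0 : Euc n) 1),
      ∀ x, (x, u) ∈ normalBundle K ↔ x = gaussMapInv K u := by
  obtain ⟨L, hL⟩ := exists_lipschitzWith_suppFn hK hne
  have hae := ae_restrict_levelSet_supportingFunctionals_subsingleton lipschitzWith_one_norm
    isPosHomogeneous_norm hL (isPosHomogeneous_suppFn K)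
  simp only [← mem_sphere_zero_iff_norm, ofPred_mem_eq, finrank_euclideanSpace_fin] at hae
  filter_upwards [hae, ae_restrict_mem isClosed_sphere.measurableSet] with u hsub hu
    using mem_normalBundle_iff_eq_gaussMapInv hK hne (mem_sphere_zero_iff_norm.1 hu) hsub

lemma isFiniteMeasure_bdryMeasure (hKc : IsCompact K) (hK : Convex ℝ K)
    (h0 : 0 ∈ interior K) : IsFiniteMeasure (bdryMeasure n K) := by
  obtain ⟨L, hL⟩ := hK.lipschitz_gauge (mem_interior_iff_mem_nhds.1 h0)
  have := hausdorffMeasure_lt_top_of_isCompact_of_subset_levelSet hL (isPosHomogeneous_gauge K)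
    (hKc.of_isClosed_subset isClosed_frontier hKc.isClosed.frontier_subset)
    fun x hx ↦ (gauge_eq_one_iff_mem_frontier hK (mem_interior_iff_mem_nhds.1 h0)).2 hx
  rw [finrank_euclideanSpace_fin] at this
  exact isFiniteMeasure_restrict.2 this.ne

lemma isFiniteMeasure_hausdorffMeasure_restrict_sphere (n : ℕ) :
    IsFiniteMeasure ((μH[(n : ℝ) - 1]).restrict (sphere (0 : Euc n) 1)) := by
  have := hausdorffMeasure_lt_top_of_isCompact_of_subset_levelSet lipschitzWith_one_norm
    isPosHomogeneous_norm (isCompact_sphere (0 : Euc n) 1) fun x hx ↦ mem_sphere_zero_iff_norm.1 hx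
  rw [finrank_euclideanSpace_fin] at this
  exact isFiniteMeasure_restrict.2 this.ne

theorem lintegral_curvFn_rpow_mul (hK : IsConvexBody K) (h0 : 0 ∈ interior K) {a b : ℝ}
    (ha : 0 < a) (hb : 0 < b) (hab : a + b = 1) {k : Euc n → ℝ≥0∞} (hk : Measurable k) :
    ∫⁻ u in sphere 0 1, curvFn n K u ^ a * k u ∂μH[(n : ℝ) - 1] =
      ∫⁻ x, gaussCurv n K x ^ b * k (gaussMap K x) ∂bdryMeasure n K := by
  have hN : IsCompact (normalBundle K) := isCompact_normalBundle hK.1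
  have hν := ae_bdryMeasure_mem_normalBundle_iff hK.2.1 h0
  have hτ := ae_sphere_mem_normalBundle_iff hK.1 (hK.2.2.mono interior_subset)
  have := isFiniteMeasure_bdryMeasure hK.1 hK.2.1 h0
  have := isFiniteMeasure_hausdorffMeasure_restrict_sphere n
  exact lintegral_rnDeriv_map_rpow_mul_comm hN.measurableSet
    (aemeasurable_of_isCompact_of_ae_mem_iff hN hν)
    (aemeasurable_of_isCompact_of_ae_mem_iff (hN.image continuous_swap)
      (by simpa [image_swap_eq_preimage_swap] using hτ)) hν hτ ha hb hab hk

end ConvexBody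

theorem statement18 (n : ℕ) (hn : 0 < n) (p : ℝ) (hp : 0 < p) (K : Set (Euc n))
    (hK : IsConvexBody K) (h0 : (0 : Euc n) ∈ interior K) :
    ∫⁻ u in Metric.sphere (0 : Euc n) 1,
        (curvFn n K u / ENNReal.ofReal (suppFn K u) ^ (p - 1)) ^ ((n : ℝ) / (n + p))
        ∂(Measure.hausdorffMeasure ((n : ℝ) - 1)) =
      ∫⁻ x, (gaussCurv n K x /
          ENNReal.ofReal (suppFn K (gaussMap K x)) ^ ((p - 1) * n / p)) ^ (p / (n + p))
        ∂(bdryMeasure n K) := by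
  obtain ⟨L, hL⟩ := exists_lipschitzWith_suppFn hK.1 (hK.2.2.mono interior_subset)
  have : (0 : ℝ) < n := Nat.cast_pos.2 hn
  have ha : 0 < (n : ℝ) / (n + p) := by positivity
  have hb : 0 < p / (n + p) := by positivity
  have hexp : (p - 1) * n / p * (p / (n + p)) = (p - 1) * (n / (n + p)) := by field_simp
  simp only [ennreal_div_rpow_rpow ha.le, ennreal_div_rpow_rpow hb.le, hexp]
  exact lintegral_curvFn_rpow_mul hK h0 ha hb (by field_simp)
    (hL.continuous.measurable.ennreal_ofReal.pow_const _)

end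
end
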